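/- arXiv:1505.01189 — 5 statements merged into one kernel-verified Lean document; each statement's English description precedes it below -/
import Mathlib

section
/- For every sequence p = p(n) with 0 ≤ p(n) ≤ 1, a random graph G ∈ G(n,p) is with high probability reconstructible: every graph H on the same vertex set size whose deck equals the deck of G is isomorphic to G. -/
/-!
Since the complement of a reconstructible graph is reconstructible, we may assume `p ≤ 1 / 2`. There
are three ranges of `n p`.

* `n p ≤ (4 / 5) log n`: by the second moment method some vertex is isolated
  (`gnpProb_no_isolated_le`), and a graph with an isolated vertex is reconstructible from its number
  of edges and the card of that vertex (`reconstructible_of_isolated`).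

* Otherwise the rigidity criterion `reconstructible_of_rigid` applies. Suppose `H` has the deck of
  `G`, and identify the cards `G - v` and `H - v`. If `G` and `H` differ, comparing the cards of
  other vertices gives permutations that are automorphisms of `G` away from a few exceptional
  vertices (`PreservesOff`); if these are trivial on the neighbourhood of `v` and no other vertex is
  adjacent to almost all of it, then `G` and `H` must agree.

* `n p ≥ 120 log n`: a union bound over all maps `g` shows that there are no nontrivial partial
  automorphisms at all. A map moving `m` points moves about `m n / 2` pairs, a third of which are
  independent of their images (`exists_indep`, `exists_pairs`), so `g` is a partial automorphism
  with probability at most `(1 - p) ^ (m (n - 6) / 6)`, and the sum over `g` is controlled by the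
  generating function `sum_moved_le`.

* `(4 / 5) log n ≤ n p ≤ 120 log n`: partial automorphisms may move vertices of degree less than
  `34`, but such vertices are few and no two of them have a common neighbour, and any two vertices
  have at most five common neighbours. A partial automorphism moving a vertex of degree at least
  `34` then produces `4 m` edges inside its set of `m` moved points whose images are `4 m` further
  edges (`IsWitness`, `sparse_rigid`), and a union bound rules this out.

The resulting bounds are uniform in `p` (`eventually_bound`).
-/

open scoped Classical

/-- The number of edges of a graph on `Fin n`. -/
noncomputable def edgeCount {n : ℕ} (G : SimpleGraph (Fin n)) : ℕ := G.edgeFinset.card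

/-- The probability of the graph `G` under the Erdős–Rényi `G(n,p)` distribution. -/
noncomputable def gnpWeight (n : ℕ) (p : ℝ) (G : SimpleGraph (Fin n)) : ℝ :=
  p ^ edgeCount G * (1 - p) ^ (n.choose 2 - edgeCount G)

/-- The probability of a set `A` of graphs under the `G(n,p)` distribution. -/
noncomputable def gnpProb (n : ℕ) (p : ℝ) (A : Set (SimpleGraph (Fin n))) : ℝ :=
  ∑ G : SimpleGraph (Fin n), if G ∈ A then gnpWeight n p G else 0

/-- Two graphs on the same vertex set have the same deck if there is a bijection `σ` of the
vertices such that for every vertex `v`, the vertex-deleted subgraphs `G - v` and `H - σ v`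
are isomorphic. This is the equality of the decks as multisets of isomorphism classes. -/
def SameDeck {V : Type*} (G H : SimpleGraph V) : Prop :=
  ∃ σ : V ≃ V, ∀ v : V,
    Nonempty ((G.induce {u | u ≠ v}) ≃g (H.induce {u | u ≠ σ v}))

/-- A graph is reconstructible if every graph (on a vertex set of the same size) with the
same deck is isomorphic to it. -/
def Reconstructible {V : Type*} (G : SimpleGraph V) : Prop :=
  ∀ H : SimpleGraph V, SameDeck G H → Nonempty (G ≃g H)

/-! ### Expectations in `G(n,p)` -/

/-- The expectation of `f` under `G(n,p)`. -/
noncomputable def gE (n : ℕ) (p : ℝ) (f : SimpleGraph (Fin n) → ℝ) : ℝ :=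
  ∑ G : SimpleGraph (Fin n), gnpWeight n p G * f G

/-- The set of all `n.choose 2` potential edges. -/
noncomputable def allE (n : ℕ) : Finset (Sym2 (Fin n)) :=
  Finset.univ.filter (fun e => ¬ e.IsDiag)

lemma mem_allE {n : ℕ} {e : Sym2 (Fin n)} : e ∈ allE n ↔ ¬ e.IsDiag := by simp [allE]

lemma mk_mem_allE {n : ℕ} {x y : Fin n} : s(x, y) ∈ allE n ↔ x ≠ y := by simp [allE]

lemma card_allE (n : ℕ) : (allE n).card = n.choose 2 := by
  have := Sym2.card_subtype_not_diag (α := Fin n)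
  rw [Fintype.card_fin, Fintype.card_subtype] at this
  rw [← this, allE]

lemma edgeFinset_subset_allE {n : ℕ} (G : SimpleGraph (Fin n)) : G.edgeFinset ⊆ allE n := by
  intro e he
  rw [mem_allE]
  exact G.not_isDiag_of_mem_edgeSet (SimpleGraph.mem_edgeFinset.1 he)

lemma sum_graph_eq {n : ℕ} (f : Finset (Sym2 (Fin n)) → ℝ) :
    ∑ G : SimpleGraph (Fin n), f G.edgeFinset = ∑ S ∈ (allE n).powerset, f S := by
  refine Finset.sum_bij' (fun G _ => G.edgeFinset)
    (fun S _ => SimpleGraph.fromEdgeSet (S : Set (Sym2 (Fin n)))) ?_ ?_ ?_ ?_ ?_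
  · intro G _
    exact Finset.mem_powerset.2 (edgeFinset_subset_allE G)
  · intro S _; exact Finset.mem_univ _
  · intro G _; simp
  · intro S hS
    ext e
    rw [Finset.mem_powerset] at hS
    simp only [SimpleGraph.mem_edgeFinset, SimpleGraph.edgeSet_fromEdgeSet, Set.mem_sdiff,
      Finset.mem_coe]
    constructor
    · exact fun h => h.1
    · exact fun h => ⟨h, mem_allE.1 (hS h)⟩
  · intro G _; rfl

/-- The edges of `G(n,p)` are independent: the expectation of a product of functions of single
edges factorises. -/
lemma gE_prod {n : ℕ} {p : ℝ} {S : Finset (Sym2 (Fin n))} (hS : S ⊆ allE n)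
    (a b : Sym2 (Fin n) → ℝ) :
    gE n p (fun G => ∏ e ∈ S, if e ∈ G.edgeSet then a e else b e)
      = ∏ e ∈ S, (p * a e + (1 - p) * b e) := by
  have key : ∀ G : SimpleGraph (Fin n),
      gnpWeight n p G * (∏ e ∈ S, if e ∈ G.edgeSet then a e else b e)
      = (fun T : Finset (Sym2 (Fin n)) =>
          (∏ e ∈ T, p * (if e ∈ S then a e else 1)) *
          ∏ e ∈ allE n \ T, (1 - p) * (if e ∈ S then b e else 1)) G.edgeFinset := by
    intro G
    have hG := edgeFinset_subset_allE G
    simp only [Finset.prod_mul_distrib, Finset.prod_const]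
    rw [Finset.card_sdiff_of_subset hG, card_allE, gnpWeight, edgeCount]
    have h1 : (∏ e ∈ S, if e ∈ G.edgeSet then a e else b e)
        = ∏ e ∈ allE n, if e ∈ S then (if e ∈ G.edgeSet then a e else b e) else 1 := by
      rw [Finset.prod_ite_mem, Finset.inter_eq_right.2 hS]
    rw [h1, ← Finset.prod_sdiff hG]
    have h2 : (∏ e ∈ allE n \ G.edgeFinset,
        if e ∈ S then (if e ∈ G.edgeSet then a e else b e) else 1)
        = ∏ e ∈ allE n \ G.edgeFinset, if e ∈ S then b e else 1 := by
      refine Finset.prod_congr rfl fun e he => ?_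
      rw [Finset.mem_sdiff, SimpleGraph.mem_edgeFinset] at he
      simp [he.2]
    have h3 : (∏ e ∈ G.edgeFinset,
        if e ∈ S then (if e ∈ G.edgeSet then a e else b e) else 1)
        = ∏ e ∈ G.edgeFinset, if e ∈ S then a e else 1 := by
      refine Finset.prod_congr rfl fun e he => ?_
      rw [SimpleGraph.mem_edgeFinset] at he
      simp [he]
    rw [h2, h3]; ring
  rw [gE, Finset.sum_congr rfl (fun G _ => key G)]
  rw [sum_graph_eq (fun T : Finset (Sym2 (Fin n)) =>
          (∏ e ∈ T, p * (if e ∈ S then a e else 1)) *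
          ∏ e ∈ allE n \ T, (1 - p) * (if e ∈ S then b e else 1)), ← Finset.prod_add]
  have h4 : ∀ e ∈ allE n, p * (if e ∈ S then a e else 1) + (1 - p) * (if e ∈ S then b e else 1)
      = if e ∈ S then p * a e + (1 - p) * b e else 1 := by
    intro e _
    split_ifs <;> ring
  rw [Finset.prod_congr rfl h4, Finset.prod_ite_mem, Finset.inter_eq_right.2 hS]

lemma gnpWeight_nonneg {n : ℕ} {p : ℝ} (h0 : 0 ≤ p) (h1 : p ≤ 1) (G : SimpleGraph (Fin n)) :
    0 ≤ gnpWeight n p G :=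
  mul_nonneg (pow_nonneg h0 _) (pow_nonneg (by linarith) _)

lemma gE_one (n : ℕ) (p : ℝ) : gE n p (fun _ => 1) = 1 := by
  simpa using gE_prod (n := n) (p := p) (Finset.empty_subset _) (fun _ => 1) (fun _ => 1)

lemma gE_mono {n : ℕ} {p : ℝ} (h0 : 0 ≤ p) (h1 : p ≤ 1) {f g : SimpleGraph (Fin n) → ℝ}
    (h : ∀ G, f G ≤ g G) : gE n p f ≤ gE n p g :=
  Finset.sum_le_sum fun G _ => mul_le_mul_of_nonneg_left (h G) (gnpWeight_nonneg h0 h1 G)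

lemma gE_sum {n : ℕ} {p : ℝ} {ι : Type*} (s : Finset ι) (f : ι → SimpleGraph (Fin n) → ℝ) :
    gE n p (fun G => ∑ i ∈ s, f i G) = ∑ i ∈ s, gE n p (f i) := by
  simp only [gE, Finset.mul_sum]
  exact Finset.sum_comm

lemma gE_add {n : ℕ} {p : ℝ} (f g : SimpleGraph (Fin n) → ℝ) :
    gE n p (fun G => f G + g G) = gE n p f + gE n p g := by
  simp only [gE, mul_add, Finset.sum_add_distrib]

lemma gE_const_mul {n : ℕ} {p : ℝ} (c : ℝ) (f : SimpleGraph (Fin n) → ℝ) :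
    gE n p (fun G => c * f G) = c * gE n p f := by
  simp only [gE, Finset.mul_sum]
  exact Finset.sum_congr rfl fun G _ => by ring

lemma gnpProb_eq {n : ℕ} {p : ℝ} (A : Set (SimpleGraph (Fin n))) :
    gnpProb n p A = gE n p (fun G => if G ∈ A then 1 else 0) := by
  simp [gnpProb, gE]

/-- Markov's inequality. -/
lemma gnpProb_le_gE {n : ℕ} {p : ℝ} (h0 : 0 ≤ p) (h1 : p ≤ 1) {A : Set (SimpleGraph (Fin n))}
    {f : SimpleGraph (Fin n) → ℝ} (hf : ∀ G, 0 ≤ f G) (hA : ∀ G ∈ A, 1 ≤ f G) :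
    gnpProb n p A ≤ gE n p f := by
  rw [gnpProb_eq]
  refine gE_mono h0 h1 fun G => ?_
  split_ifs with h
  · exact hA G h
  · exact hf G

lemma gnpProb_mono {n : ℕ} {p : ℝ} (h0 : 0 ≤ p) (h1 : p ≤ 1) {A B : Set (SimpleGraph (Fin n))}
    (h : A ⊆ B) : gnpProb n p A ≤ gnpProb n p B := by
  rw [gnpProb_eq B]
  refine gnpProb_le_gE h0 h1 (fun G => by split_ifs <;> norm_num) fun G hG => ?_
  rw [if_pos (h hG)]

/-- The union bound. -/
lemma gnpProb_biUnion_le {n : ℕ} {p : ℝ} (h0 : 0 ≤ p) (h1 : p ≤ 1) {ι : Type*} (s : Finset ι)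
    (A : Set (SimpleGraph (Fin n))) (B : ι → Set (SimpleGraph (Fin n)))
    (h : ∀ G ∈ A, ∃ i ∈ s, G ∈ B i) : gnpProb n p A ≤ ∑ i ∈ s, gnpProb n p (B i) := by
  simp only [gnpProb_eq (B _)]
  rw [← gE_sum]
  have hnn : ∀ (G : SimpleGraph (Fin n)), ∀ i ∈ s, (0 : ℝ) ≤ if G ∈ B i then 1 else 0 := by
    intro G i _; split_ifs <;> norm_num
  refine gnpProb_le_gE h0 h1 (fun G => Finset.sum_nonneg (hnn G)) fun G hG => ?_
  obtain ⟨i, hi, hGi⟩ := h G hG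
  calc (1 : ℝ) = if G ∈ B i then 1 else 0 := by rw [if_pos hGi]
    _ ≤ _ := Finset.single_le_sum (hnn G) hi

lemma gnpProb_union_le {n : ℕ} {p : ℝ} (h0 : 0 ≤ p) (h1 : p ≤ 1)
    (A B : Set (SimpleGraph (Fin n))) :
    gnpProb n p (A ∪ B) ≤ gnpProb n p A + gnpProb n p B := by
  rw [gnpProb_eq A, gnpProb_eq B, ← gE_add]
  refine gnpProb_le_gE h0 h1 (fun G => by split_ifs <;> norm_num) fun G hG => ?_
  rcases hG with h | h <;> simp only [h, if_true] <;> split_ifs <;> norm_num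

lemma gnpProb_add_compl {n : ℕ} {p : ℝ} (A : Set (SimpleGraph (Fin n))) :
    gnpProb n p A + gnpProb n p Aᶜ = 1 := by
  rw [gnpProb_eq A, gnpProb_eq Aᶜ, ← gE_add]
  refine Eq.trans ?_ (gE_one n p)
  congr 1
  funext G
  by_cases h : G ∈ A <;> simp [h]

lemma gnpProb_nonneg {n : ℕ} {p : ℝ} (h0 : 0 ≤ p) (h1 : p ≤ 1)
    (A : Set (SimpleGraph (Fin n))) : 0 ≤ gnpProb n p A :=
  Finset.sum_nonneg fun G _ => by
    split_ifs
    · exact gnpWeight_nonneg h0 h1 G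
    · exact le_rfl

/-- The probability that all edges in `F` are present and all edges in `F'` are absent. -/
lemma gnpProb_cyl {n : ℕ} {p : ℝ} {F F' : Finset (Sym2 (Fin n))} (hF : F ⊆ allE n)
    (hF' : F' ⊆ allE n) (hd : Disjoint F F') :
    gnpProb n p {G | (∀ e ∈ F, e ∈ G.edgeSet) ∧ ∀ e ∈ F', e ∉ G.edgeSet}
      = p ^ F.card * (1 - p) ^ F'.card := by
  have := gE_prod (n := n) (p := p) (Finset.union_subset hF hF')
    (fun e => if e ∈ F then 1 else 0) (fun e => if e ∈ F' then 1 else 0)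
  rw [Finset.prod_union hd] at this
  have e1 : ∀ e ∈ F, p * (if e ∈ F then (1 : ℝ) else 0) + (1 - p) * (if e ∈ F' then 1 else 0)
      = p := by
    intro e he
    simp [he, Finset.disjoint_left.1 hd he]
  have e2 : ∀ e ∈ F', p * (if e ∈ F then (1 : ℝ) else 0) + (1 - p) * (if e ∈ F' then 1 else 0)
      = 1 - p := by
    intro e he
    simp [he, Finset.disjoint_right.1 hd he]
  rw [Finset.prod_congr rfl e1, Finset.prod_congr rfl e2, Finset.prod_const, Finset.prod_const]
    at this
  rw [← this, gnpProb_eq]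
  congr 1
  funext G
  rw [Finset.prod_union hd]
  by_cases h : (∀ e ∈ F, e ∈ G.edgeSet) ∧ ∀ e ∈ F', e ∉ G.edgeSet
  · rw [Set.mem_ofPred_eq, if_pos h, Finset.prod_eq_one, Finset.prod_eq_one, one_mul]
    · intro e he; simp [h.2 e he, he]
    · intro e he; simp [h.1 e he, he]
  · rw [Set.mem_ofPred_eq, if_neg h]
    rw [not_and_or] at h
    push Not at h
    rcases h with ⟨e, he, hG⟩ | ⟨e, he, hG⟩
    · symm
      apply mul_eq_zero_of_left
      refine Finset.prod_eq_zero he ?_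
      simp [hG, Finset.disjoint_left.1 hd he]
    · symm
      apply mul_eq_zero_of_right
      refine Finset.prod_eq_zero he ?_
      simp [hG, Finset.disjoint_right.1 hd he]

lemma gnpProb_present {n : ℕ} {p : ℝ} {F : Finset (Sym2 (Fin n))} (hF : F ⊆ allE n) :
    gnpProb n p {G | ∀ e ∈ F, e ∈ G.edgeSet} = p ^ F.card := by
  simpa using gnpProb_cyl (p := p) hF (Finset.empty_subset _) (Finset.disjoint_empty_right _)

lemma gnpProb_absent {n : ℕ} {p : ℝ} {F : Finset (Sym2 (Fin n))} (hF : F ⊆ allE n) :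
    gnpProb n p {G | ∀ e ∈ F, e ∉ G.edgeSet} = (1 - p) ^ F.card := by
  simpa using gnpProb_cyl (p := p) (Finset.empty_subset _) hF (Finset.disjoint_empty_left _)

/-! ### Deterministic criteria for reconstructibility -/

/-- Twice the number of edges, as the number of ordered pairs of adjacent vertices. -/
noncomputable def dartCount {V : Type*} [Fintype V] (G : SimpleGraph V) : ℕ :=
  (Finset.univ.filter (fun q : V × V => G.Adj q.1 q.2)).card

/-- An isomorphism of cards extends to a permutation of the vertex set. -/
lemma exists_perm_of_card_iso {V : Type*} [Fintype V] {G H : SimpleGraph V} {v w : V}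
    (h : Nonempty ((G.induce {u | u ≠ v}) ≃g (H.induce {u | u ≠ w}))) :
    ∃ φ : Equiv.Perm V, φ v = w ∧ ∀ x y, x ≠ v → y ≠ v → (G.Adj x y ↔ H.Adj (φ x) (φ y)) := by
  obtain ⟨f⟩ := h
  let e : {x // x ≠ v} ≃ {x // x ≠ w} := f.toEquiv
  refine ⟨e.extendSubtype, ?_, ?_⟩
  · have := e.extendSubtype_not_mem v (by simp)
    simpa using this
  · intro x y hx hy
    rw [e.extendSubtype_apply_of_mem x hx, e.extendSubtype_apply_of_mem y hy]
    exact (f.map_rel_iff (a := ⟨x, hx⟩) (b := ⟨y, hy⟩)).symm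

/-- Kelly's lemma for edges: each edge lies in all but two of the cards. -/
lemma sum_card_darts {V : Type*} [Fintype V] (G : SimpleGraph V) :
    ∑ v : V, (Finset.univ.filter
      (fun q : V × V => G.Adj q.1 q.2 ∧ q.1 ≠ v ∧ q.2 ≠ v)).card
      = dartCount G * (Fintype.card V - 2) := by
  simp only [Finset.card_filter]
  rw [Finset.sum_comm, dartCount, Finset.card_eq_sum_ones, Finset.sum_mul, Finset.sum_filter]
  refine Finset.sum_congr rfl fun q _ => ?_
  split_ifs with h
  · rw [← Finset.card_filter, one_mul]
    have : (Finset.univ.filter fun v => G.Adj q.1 q.2 ∧ q.1 ≠ v ∧ q.2 ≠ v)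
        = ({q.1, q.2} : Finset V)ᶜ := by
      ext v
      simp only [Finset.mem_filter, Finset.mem_univ, true_and, Finset.mem_compl,
        Finset.mem_insert, Finset.mem_singleton, not_or, h]
      exact ⟨fun h => ⟨h.1.symm, h.2.symm⟩, fun h => ⟨Ne.symm h.1, Ne.symm h.2⟩⟩
    rw [this, Finset.card_compl, Finset.card_pair h.ne]
  · simp [h]

lemma SameDeck.dartCount_eq {V : Type*} [Fintype V] {G H : SimpleGraph V} (h : SameDeck G H)
    (hV : 3 ≤ Fintype.card V) : dartCount G = dartCount H := by
  obtain ⟨σ, hσ⟩ := h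
  have key : ∀ v, (Finset.univ.filter
      (fun q : V × V => G.Adj q.1 q.2 ∧ q.1 ≠ v ∧ q.2 ≠ v)).card =
      (Finset.univ.filter (fun q : V × V => H.Adj q.1 q.2 ∧ q.1 ≠ σ v ∧ q.2 ≠ σ v)).card := by
    intro v
    obtain ⟨φ, hv, hφ⟩ := exists_perm_of_card_iso (hσ v)
    refine Finset.card_equiv (φ.prodCongr φ) ?_
    rintro ⟨x, y⟩
    simp only [Finset.mem_filter, Finset.mem_univ, true_and, Equiv.prodCongr_apply, Prod.map_apply,
      ← hv, ne_eq, φ.injective.eq_iff]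
    constructor
    · rintro ⟨h1, h2, h3⟩; exact ⟨(hφ x y h2 h3).1 h1, h2, h3⟩
    · rintro ⟨h1, h2, h3⟩; exact ⟨(hφ x y h2 h3).2 h1, h2, h3⟩
  have h1 := sum_card_darts G
  have h2 := sum_card_darts H
  rw [← Equiv.sum_comp σ] at h2
  rw [Finset.sum_congr rfl fun v _ => key v, h2] at h1
  exact (Nat.eq_of_mul_eq_mul_right (by omega) h1).symm

lemma eq_of_le_of_dartCount_eq {V : Type*} [Fintype V] {G H : SimpleGraph V} (h : G ≤ H)
    (hc : dartCount G = dartCount H) : G = H := by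
  have := Finset.eq_of_subset_of_card_le
    (s := Finset.univ.filter (fun q : V × V => G.Adj q.1 q.2))
    (t := Finset.univ.filter (fun q : V × V => H.Adj q.1 q.2))
    (Finset.monotone_filter_right _ fun q _ hq => h hq) hc.symm.le
  ext x y
  have h2 := Finset.ext_iff.1 this (x, y)
  simpa using h2

/-- A graph `H` with the deck of `G` may be relabelled so that it differs from `G` only in the
neighbourhood of a prescribed vertex `v`; the other cards are still isomorphic. -/
lemma SameDeck.exists_relabel {V : Type*} [Fintype V] {G H : SimpleGraph V} (h : SameDeck G H)
    (hV : 3 ≤ Fintype.card V) (v : V) :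
    ∃ H' : SimpleGraph V, Nonempty (H' ≃g H) ∧ dartCount G = dartCount H' ∧
      (∀ x y, x ≠ v → y ≠ v → (G.Adj x y ↔ H'.Adj x y)) ∧
      ∀ w, w ≠ v → ∃ φ : Equiv.Perm V, φ w ≠ v ∧
        ∀ x y, x ≠ w → y ≠ w → (G.Adj x y ↔ H'.Adj (φ x) (φ y)) := by
  have hD := h.dartCount_eq hV
  obtain ⟨σ, hσ⟩ := h
  obtain ⟨ψ, hv, hψ⟩ := exists_perm_of_card_iso (hσ v)
  refine ⟨H.comap ψ, ⟨SimpleGraph.Iso.comap ψ H⟩, ?_, hψ, ?_⟩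
  · rw [hD, dartCount, dartCount]
    refine (Finset.card_equiv (ψ.prodCongr ψ) ?_).symm
    rintro ⟨x, y⟩
    simp
  · intro w hw
    obtain ⟨φ, h1, h2⟩ := exists_perm_of_card_iso (hσ w)
    refine ⟨φ.trans ψ.symm, ?_, ?_⟩
    · rw [Equiv.trans_apply, h1]
      intro h3
      rw [Equiv.symm_apply_eq, hv] at h3
      exact hw (σ.injective h3)
    · intro x y hx hy
      simp [h2 x y hx hy]

/-- A graph with an isolated vertex is reconstructible. -/
lemma reconstructible_of_isolated {V : Type*} [Fintype V] {G : SimpleGraph V}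
    (hV : 3 ≤ Fintype.card V) (v : V) (hv : ∀ x, ¬ G.Adj v x) : Reconstructible G := by
  intro H hH
  obtain ⟨H', ⟨e⟩, hD, hoff, -⟩ := hH.exists_relabel hV v
  have : G = H' := by
    refine eq_of_le_of_dartCount_eq (fun x y hxy => ?_) hD
    have hx : x ≠ v := by rintro rfl; exact hv _ hxy
    have hy : y ≠ v := by rintro rfl; exact hv _ hxy.symm
    exact (hoff x y hx hy).1 hxy
  rw [this]
  exact ⟨e⟩

/-- `φ` preserves adjacency and non-adjacency of `G` outside the set `A`. -/
def PreservesOff {V : Type*} (G : SimpleGraph V) (φ : Equiv.Perm V) (A : Finset V) : Prop :=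
  ∀ x y, x ∉ A → y ∉ A → (G.Adj x y ↔ G.Adj (φ x) (φ y))

/-- The rigidity criterion: suppose that any permutation that is an automorphism of `G` away from
at most three vertices fixes all the other vertices of a set `K`, that all neighbours of `v` lie
in `K`, and that no other vertex is joined to almost all neighbours of `v`. Then `G` is
reconstructible. -/
lemma reconstructible_of_rigid {V : Type*} [Fintype V] {G : SimpleGraph V}
    (hV : 3 ≤ Fintype.card V) (v : V) (K : Set V) (hvK : ∀ x, G.Adj v x → x ∈ K)
    (hrig : ∀ (φ : Equiv.Perm V) (A : Finset V), A.card ≤ 3 → PreservesOff G φ A →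
      ∀ x ∈ K, x ∉ A → φ x = x)
    (hnbr : ∀ z, z ≠ v → 3 ≤ (Finset.univ.filter fun x => G.Adj v x ∧ ¬ G.Adj z x).card) :
    Reconstructible G := by
  intro H hH
  obtain ⟨H', ⟨e⟩, hD, hoff, hcards⟩ := hH.exists_relabel hV v
  -- every card `G - w` shows that the neighbours of `v` other than `w` are neighbours of `v` in `H'`
  have main : ∀ w, w ≠ v → ∀ x, G.Adj v x → x ≠ w → H'.Adj v x := by
    intro w hw
    obtain ⟨φ, hφw, hφ⟩ := hcards w hw
    obtain ⟨y, hy⟩ := φ.surjective v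
    have hyw : y ≠ w := by rintro rfl; exact hφw hy
    have hP : PreservesOff G φ {w, v, y} := by
      intro a b ha hb
      simp only [Finset.mem_insert, Finset.mem_singleton, not_or] at ha hb
      rw [hφ a b ha.1 hb.1]
      refine (hoff _ _ ?_ ?_).symm
      · rw [← hy]; exact fun h => ha.2.2 (φ.injective h)
      · rw [← hy]; exact fun h => hb.2.2 (φ.injective h)
    have hfix := hrig φ _ Finset.card_le_three hP
    have hfix' : ∀ x, G.Adj v x → x ≠ w → x ≠ y → φ x = x := by
      intro x hx hxw hxy
      refine hfix x (hvK x hx) ?_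
      simp [hxw, hx.ne', hxy]
    -- otherwise `φ v` would be joined to almost all neighbours of `v`
    have hv : φ v = v := by
      by_contra hne
      have h3 := hnbr (φ v) hne
      have hsub : (Finset.univ.filter fun x => G.Adj v x ∧ ¬ G.Adj (φ v) x) ⊆ {w, y} := by
        intro x hx
        simp only [Finset.mem_filter, Finset.mem_univ, true_and] at hx
        by_contra hx'
        simp only [Finset.mem_insert, Finset.mem_singleton, not_or] at hx'
        have h4 := (hφ v x hw.symm hx'.1).1 hx.1
        rw [hfix' x hx.1 hx'.1 hx'.2] at h4
        exact hx.2 ((hoff _ _ hne hx.1.ne').2 h4)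
      have := (Finset.card_le_card hsub).trans Finset.card_le_two
      omega
    have hyv : y = v := φ.injective (hy.trans hv.symm)
    intro x hx hxw
    have h4 := (hφ v x hw.symm hxw).1 hx
    rwa [hv, hfix' x hx hxw (hyv ▸ hx.ne')] at h4
  have hvx : ∀ x, G.Adj v x → H'.Adj v x := by
    intro x hx
    obtain ⟨w, hw⟩ : ∃ w, w ∉ ({v, x} : Finset V) := by
      by_contra hcon
      push Not at hcon
      have : (Finset.univ : Finset V).card ≤ ({v, x} : Finset V).card :=
        Finset.card_le_card fun w _ => hcon w
      have := this.trans Finset.card_le_two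
      rw [Finset.card_univ] at this
      omega
    simp only [Finset.mem_insert, Finset.mem_singleton, not_or] at hw
    exact main w hw.1 x hx (Ne.symm hw.2)
  have : G = H' := by
    refine eq_of_le_of_dartCount_eq (fun x y hxy => ?_) hD
    by_cases hx : x = v
    · subst hx; exact hvx y hxy
    by_cases hy : y = v
    · subst hy; exact (hvx x hxy.symm).symm
    exact (hoff x y hx hy).1 hxy
  rw [this]
  exact ⟨e⟩

lemma SameDeck.compl {V : Type*} {G H : SimpleGraph V} (h : SameDeck G H) : SameDeck Gᶜ Hᶜ := by
  obtain ⟨σ, hσ⟩ := h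
  refine ⟨σ, fun v => ?_⟩
  obtain ⟨f⟩ := hσ v
  refine ⟨⟨f.toEquiv, ?_⟩⟩
  intro a b
  have h1 := f.map_rel_iff (a := a) (b := b)
  have h2 : f a = f b ↔ a = b := f.injective.eq_iff
  simp only [SimpleGraph.comap_adj, SimpleGraph.compl_adj, Function.Embedding.subtype_apply] at h1 ⊢
  change ((f a : V) ≠ f b ∧ ¬ H.Adj (f a) (f b)) ↔ _
  rw [h1, ne_eq, ← Subtype.ext_iff, h2, ne_eq, ← Subtype.ext_iff]

lemma Reconstructible.compl {V : Type*} {G : SimpleGraph V} (h : Reconstructible G) :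
    Reconstructible Gᶜ := by
  intro H hH
  have := hH.compl
  rw [compl_compl] at this
  obtain ⟨f⟩ := h _ this
  refine ⟨⟨f.toEquiv, ?_⟩⟩
  intro a b
  have h1 := f.map_rel_iff (a := a) (b := b)
  have h2 : f a = f b ↔ a = b := f.injective.eq_iff
  change H.Adj (f a) (f b) ↔ _
  rw [SimpleGraph.compl_adj] at h1 ⊢
  by_cases hab : a = b
  · subst hab; simp
  · have : f a ≠ f b := fun h => hab (h2.1 h)
    tauto

/-! ### Independent pairs of edges, and rigidity -/

/-- If `f` is injective and without fixed points on `E`, then at least a third of `E` is disjoint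
from its own image: a maximal subset with this property meets every orbit segment
`f⁻¹ e, e, f e`. -/
lemma exists_indep {α : Type*} [DecidableEq α] (E : Finset α) (f : α → α) (hinj : Set.InjOn f E)
    (hfix : ∀ e ∈ E, f e ≠ e) :
    ∃ E' ⊆ E, E.card ≤ 3 * E'.card ∧ Disjoint E' (E'.image f) := by
  obtain ⟨E', hE', hmax⟩ := (E.powerset.filter fun S => Disjoint S (S.image f)).exists_max_image
    Finset.card ⟨∅, by simp⟩
  simp only [Finset.mem_filter, Finset.mem_powerset] at hE' hmax
  refine ⟨E', hE'.1, ?_, hE'.2⟩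
  have hcov : E ⊆ E' ∪ E'.image f ∪ (E.filter fun e => f e ∈ E') := by
    intro e he
    by_contra hcon
    simp only [Finset.mem_union, Finset.mem_filter, not_or, not_and] at hcon
    obtain ⟨⟨h1, h2⟩, h3⟩ := hcon
    have := hmax (insert e E') ⟨Finset.insert_subset he hE'.1, ?_⟩
    · rw [Finset.card_insert_of_notMem h1] at this
      omega
    · rw [Finset.image_insert, Finset.disjoint_insert_left, Finset.disjoint_insert_right]
      refine ⟨?_, h3 he, hE'.2⟩
      rw [Finset.mem_insert, not_or]
      exact ⟨(hfix e he).symm, h2⟩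
  have h4 : (E.filter fun e => f e ∈ E').card ≤ E'.card := by
    refine Finset.card_le_card_of_injOn f (fun e he => ?_) (fun a ha b hb hab => ?_)
    · exact (Finset.mem_filter.1 he).2
    · exact hinj (Finset.mem_filter.1 ha).1 (Finset.mem_filter.1 hb).1 hab
  have h5 := Finset.card_le_card hcov
  have h6 := Finset.card_union_le (E' ∪ E'.image f) (E.filter fun e => f e ∈ E')
  have h7 := Finset.card_union_le E' (E'.image f)
  have h8 := Finset.card_image_le (s := E') (f := f)
  omega

/-- The set of points moved by `g`. -/
noncomputable def moved {V : Type*} [Fintype V] (g : V → V) : Finset V :=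
  Finset.univ.filter fun x => g x ≠ x

lemma mem_moved {V : Type*} [Fintype V] {g : V → V} {x : V} : x ∈ moved g ↔ g x ≠ x := by
  simp [moved]

lemma map_injOn {V : Type*} {g : V → V} {S : Set V} (hg : Set.InjOn g S) :
    Set.InjOn (Sym2.map g) {e | ∀ x ∈ e, x ∈ S} := by
  intro e he e' he' h
  induction e with | _ a b
  induction e' with | _ c d
  simp only [Set.mem_ofPred_eq, Sym2.mem_iff, forall_eq_or_imp, forall_eq] at he he'
  simp only [Sym2.map_mk, Sym2.eq_iff] at h
  rw [Sym2.eq_iff]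
  rcases h with ⟨h1, h2⟩ | ⟨h1, h2⟩
  · exact Or.inl ⟨hg he.1 he'.1 h1, hg he.2 he'.2 h2⟩
  · exact Or.inr ⟨hg he.1 he'.2 h1, hg he.2 he'.1 h2⟩

lemma map_eq_self {V : Type*} {g : V → V} {x y : V} (hx : g x ≠ x)
    (h : Sym2.map g s(x, y) = s(x, y)) : g x = y := by
  simp only [Sym2.map_mk, Sym2.eq_iff] at h
  rcases h with h | h
  · exact absurd h.1 hx
  · exact h.1

/-- A lower bound for the number of edges of a graph from the degrees of the vertices in `M`. -/
lemma card_edges_ge {V : Type*} [Fintype V] (F : SimpleGraph V) (M : Finset V) (d : ℕ)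
    (h : ∀ x ∈ M, d ≤ (Finset.univ.filter fun y => F.Adj x y).card) :
    M.card * d ≤ 2 * F.edgeFinset.card := by
  rw [← F.sum_degrees_eq_twice_card_edges]
  calc M.card * d = ∑ x ∈ M, d := by rw [Finset.sum_const, smul_eq_mul]
    _ ≤ ∑ x ∈ M, F.degree x := Finset.sum_le_sum fun x hx => by
        have := h x hx
        rwa [← SimpleGraph.neighborFinset_eq_filter, SimpleGraph.card_neighborFinset_eq_degree]
          at this
    _ ≤ _ := Finset.sum_le_sum_of_subset (Finset.subset_univ M)

/-- `E'` witnesses that `g` carries `4 |M|` edges of `G` inside the set `M` of points moved by `g`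
to as many further edges of `G`. -/
structure IsWitness {n : ℕ} (G : SimpleGraph (Fin n)) (g : Fin n → Fin n)
    (E' : Finset (Sym2 (Fin n))) : Prop where
  sub : ∀ e ∈ E', ∀ x ∈ e, x ∈ moved g
  edge : ∀ e ∈ E', e ∈ G.edgeSet
  edge_map : ∀ e ∈ E', Sym2.map g e ∈ G.edgeSet
  disj : Disjoint E' (E'.image (Sym2.map g))
  inj : Set.InjOn (Sym2.map g) E'
  card : E'.card = 4 * (moved g).card

/-- The set of vertices of degree less than `34`. -/
noncomputable def lowSet {V : Type*} [Fintype V] (G : SimpleGraph V) : Finset V :=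
  Finset.univ.filter fun x => (Finset.univ.filter fun y => G.Adj x y).card < 34

/-- In a locally sparse graph in which the vertices of low degree are scattered, every partial
automorphism fixes the vertices of high degree unless there is a witness in the sense of
`IsWitness`. -/
lemma sparse_rigid {n : ℕ} {G : SimpleGraph (Fin n)}
    (hcodeg : ∀ x y, x ≠ y → (Finset.univ.filter fun z => G.Adj x z ∧ G.Adj y z).card ≤ 5)
    (hlow : ∀ u x y, x ≠ y → G.Adj u x → G.Adj u y → x ∈ lowSet G → y ∉ lowSet G)
    (hwit : ∀ g : Fin n → Fin n, (moved g).Nonempty → ∀ E', ¬ IsWitness G g E')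
    (φ : Equiv.Perm (Fin n)) (A : Finset (Fin n)) (hA : A.card ≤ 3) (hφ : PreservesOff G φ A) :
    ∀ x ∉ lowSet G, x ∉ A → φ x = x := by
  intro x₀ hx₀ hx₀A
  by_contra hx₀φ
  set g : Fin n → Fin n := fun x => if x ∉ lowSet G ∧ x ∉ A then φ x else x with hg
  have hmem : ∀ x, x ∈ moved g ↔ x ∉ lowSet G ∧ x ∉ A ∧ φ x ≠ x := by
    intro x
    rw [mem_moved, hg]
    by_cases h : x ∉ lowSet G ∧ x ∉ A
    · simp only [h, not_false_eq_true, and_self, if_true, true_and]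
    · simp only [h, if_false, ne_eq, not_true_eq_false, false_iff]
      tauto
  have hgφ : ∀ x ∈ moved g, g x = φ x := by
    intro x hx
    rw [hmem] at hx
    simp only [hg, if_pos (And.intro hx.1 hx.2.1)]
  have hne : (moved g).Nonempty := ⟨x₀, (hmem x₀).2 ⟨hx₀, hx₀A, hx₀φ⟩⟩
  have hginj : Set.InjOn g (moved g) := by
    intro a ha b hb hab
    rw [hgφ a ha, hgφ b hb] at hab
    exact φ.injective hab
  -- the edges inside the moved set that are not mapped to themselves
  obtain ⟨F, hFadj⟩ : ∃ F : SimpleGraph (Fin n), ∀ x y, F.Adj x y ↔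
      (G.Adj x y ∧ x ∈ moved g ∧ y ∈ moved g ∧ Sym2.map g s(x, y) ≠ s(x, y)) :=
    ⟨{ Adj := fun x y => G.Adj x y ∧ x ∈ moved g ∧ y ∈ moved g ∧ Sym2.map g s(x, y) ≠ s(x, y)
       symm := ⟨fun x y h => ⟨h.1.symm, h.2.2.1, h.2.1, by rw [Sym2.eq_swap]; exact h.2.2.2⟩⟩
       loopless := ⟨fun x h => h.1.ne rfl⟩ }, fun x y => Iff.rfl⟩
  have hdeg : ∀ x ∈ moved g, 24 ≤ (Finset.univ.filter fun y => F.Adj x y).card := by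
    intro u hu
    have hu' := (hmem u).1 hu
    have h34 : 34 ≤ (Finset.univ.filter fun y => G.Adj u y).card := by
      have := hu'.1
      simp only [lowSet, Finset.mem_filter, Finset.mem_univ, true_and, not_lt] at this
      exact this
    have hlow1 : (Finset.univ.filter fun y => G.Adj u y ∧ y ∈ lowSet G).card ≤ 1 := by
      rw [Finset.card_le_one]
      intro a ha b hb
      simp only [Finset.mem_filter, Finset.mem_univ, true_and] at ha hb
      by_contra hab
      exact hlow u a b hab ha.1 hb.1 ha.2 hb.2
    have hcod := hcodeg u (φ u) hu'.2.2.symm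
    have hsub : (Finset.univ.filter fun y => G.Adj u y) ⊆
        (Finset.univ.filter fun y => F.Adj u y) ∪ ((Finset.univ.filter fun y => G.Adj u y ∧
          y ∈ lowSet G) ∪ (A ∪ ((Finset.univ.filter fun z => G.Adj u z ∧ G.Adj (φ u) z)
            ∪ {φ u}))) := by
      intro y hy
      simp only [Finset.mem_filter, Finset.mem_univ, true_and] at hy
      by_contra hcon
      simp only [Finset.mem_union, Finset.mem_filter, Finset.mem_univ, true_and, not_or, hy,
        Finset.mem_singleton] at hcon
      obtain ⟨h1, h2, h3, h4, h5⟩ := hcon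
      have hyM : y ∈ moved g := by
        refine (hmem y).2 ⟨h2, h3, fun h6 => h4 ?_⟩
        have := (hφ u y hu'.2.1 h3).1 hy
        rwa [h6] at this
      refine h1 ((hFadj u y).2 ⟨hy, hu, hyM, fun h7 => h5 ?_⟩)
      rw [← map_eq_self (mem_moved.1 hu) h7, hgφ u hu]
    have h1 := Finset.card_le_card hsub
    have h2 := Finset.card_union_le (Finset.univ.filter fun y => F.Adj u y)
      ((Finset.univ.filter fun y => G.Adj u y ∧
          y ∈ lowSet G) ∪ (A ∪ ((Finset.univ.filter fun z => G.Adj u z ∧ G.Adj (φ u) z)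
            ∪ {φ u})))
    have h3 := Finset.card_union_le (Finset.univ.filter fun y => G.Adj u y ∧
          y ∈ lowSet G) (A ∪ ((Finset.univ.filter fun z => G.Adj u z ∧ G.Adj (φ u) z)
            ∪ {φ u}))
    have h4 := Finset.card_union_le A ((Finset.univ.filter fun z => G.Adj u z ∧ G.Adj (φ u) z)
            ∪ {φ u})
    have h5 := Finset.card_union_le (Finset.univ.filter fun z => G.Adj u z ∧ G.Adj (φ u) z)
            {φ u}
    rw [Finset.card_singleton] at h5
    omega
  have hF := card_edges_ge F (moved g) 24 hdeg
  have hFM : ∀ e ∈ F.edgeFinset, (∀ x ∈ e, x ∈ moved g) ∧ e ∈ G.edgeSet ∧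
      Sym2.map g e ∈ G.edgeSet ∧ Sym2.map g e ≠ e := by
    intro e he
    rw [SimpleGraph.mem_edgeFinset] at he
    induction e with | _ a b
    rw [SimpleGraph.mem_edgeSet, hFadj] at he
    obtain ⟨h1, h2, h3, h4⟩ := he
    refine ⟨?_, h1, ?_, h4⟩
    · intro x hx
      rcases Sym2.mem_iff.1 hx with rfl | rfl
      · exact h2
      · exact h3
    · rw [Sym2.map_mk, SimpleGraph.mem_edgeSet, hgφ a h2, hgφ b h3]
      exact (hφ a b ((hmem a).1 h2).2.1 ((hmem b).1 h3).2.1).1 h1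
  have hinjF : Set.InjOn (Sym2.map g) F.edgeFinset :=
    (map_injOn hginj).mono fun e he => (hFM e he).1
  obtain ⟨E₁, hE₁, hcard, hdisj⟩ := exists_indep F.edgeFinset (Sym2.map g) hinjF
    fun e he => (hFM e he).2.2.2
  obtain ⟨E', hE', hcard'⟩ := Finset.exists_subset_card_eq
    (show 4 * (moved g).card ≤ E₁.card by omega)
  exact hwit g hne E' ⟨fun e he => (hFM e (hE₁ (hE' he))).1,
    fun e he => (hFM e (hE₁ (hE' he))).2.1, fun e he => (hFM e (hE₁ (hE' he))).2.2.1,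
    hdisj.mono hE' (Finset.image_subset_image hE'),
    hinjF.mono fun e he => hE₁ (hE' he), hcard'⟩

lemma card_split {V : Type*} [Fintype V] (P Q : V → Prop) :
    (Finset.univ.filter fun x => P x).card = (Finset.univ.filter fun x => P x ∧ Q x).card
      + (Finset.univ.filter fun x => P x ∧ ¬ Q x).card := by
  rw [← Finset.card_filter_add_card_filter_not (s := Finset.univ.filter fun x => P x) Q,
    Finset.filter_filter, Finset.filter_filter]

/-- The deterministic statement used for `p` of order `log n / n`. -/
lemma reconstructible_of_sparse {n : ℕ} {G : SimpleGraph (Fin n)} (hn : 3 ≤ n)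
    (hcodeg : ∀ x y, x ≠ y → (Finset.univ.filter fun z => G.Adj x z ∧ G.Adj y z).card ≤ 5)
    (hlow : ∀ u x y, x ≠ y → G.Adj u x → G.Adj u y → x ∈ lowSet G → y ∉ lowSet G)
    (hwit : ∀ g : Fin n → Fin n, (moved g).Nonempty → ∀ E', ¬ IsWitness G g E')
    (hv : 34 * (lowSet G).card < n) : Reconstructible G := by
  -- each low vertex together with its neighbours rules out at most `34` choices of `v`
  have hex : ∃ v, v ∉ (lowSet G).biUnion fun x =>
      insert x (Finset.univ.filter fun y => G.Adj x y) := by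
    by_contra hcon
    push Not at hcon
    have h1 : (Finset.univ : Finset (Fin n)).card ≤ _ := Finset.card_le_card fun v _ => hcon v
    have h2 := Finset.card_biUnion_le_card_mul (lowSet G)
      (fun x => insert x (Finset.univ.filter fun y => G.Adj x y)) 34 (fun x hx => by
        simp only [lowSet, Finset.mem_filter, Finset.mem_univ, true_and] at hx
        have := Finset.card_insert_le x (Finset.univ.filter fun y => G.Adj x y)
        omega)
    rw [Finset.card_univ, Fintype.card_fin] at h1
    omega
  obtain ⟨v, hv⟩ := hex
  simp only [Finset.mem_biUnion, not_exists, not_and, Finset.mem_insert, Finset.mem_filter,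
    Finset.mem_univ, true_and, not_or] at hv
  have hvlow : v ∉ lowSet G := fun h => (hv v h).1 rfl
  refine reconstructible_of_rigid (by simpa using hn) v {x | x ∉ lowSet G}
    (fun x hx hx' => (hv x hx').2 hx.symm)
    (fun φ A hA hφ x hx hxA => sparse_rigid hcodeg hlow hwit φ A hA hφ x hx hxA) ?_
  intro z hz
  have h34 : 34 ≤ (Finset.univ.filter fun y => G.Adj v y).card := by
    have := hvlow
    simp only [lowSet, Finset.mem_filter, Finset.mem_univ, true_and, not_lt] at this
    exact this
  have hc := hcodeg v z hz.symm
  have := card_split (fun y => G.Adj v y) (fun y => G.Adj z y)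
  omega

/-- The deterministic statement used for denser graphs: a graph without nontrivial partial
automorphisms is reconstructible. -/
lemma reconstructible_of_dense {n : ℕ} {G : SimpleGraph (Fin n)} (hn : 3 ≤ n)
    (hrig : ∀ (φ : Equiv.Perm (Fin n)) (A : Finset (Fin n)), A.card ≤ 4 → PreservesOff G φ A →
      ∀ x, x ∉ A → φ x = x) : Reconstructible G := by
  let d : Fin n → ℕ := fun x => (Finset.univ.filter fun y => G.Adj x y).card
  obtain ⟨v, -, hv⟩ := Finset.exists_max_image Finset.univ d ⟨⟨0, by omega⟩, Finset.mem_univ _⟩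
  refine reconstructible_of_rigid (by simpa using hn) v Set.univ (fun x _ => Set.mem_univ x)
    (fun φ A hA hφ x _ hxA => hrig φ A (by omega) hφ x hxA) ?_
  intro z hz
  by_contra hcon
  -- otherwise, as `v` has maximum degree, `v` and `z` are almost twins and can be exchanged
  set P := Finset.univ.filter fun x => G.Adj v x ∧ ¬ G.Adj z x with hP
  set Q := Finset.univ.filter fun x => G.Adj z x ∧ ¬ G.Adj v x with hQ
  have hPQ : Q.card ≤ P.card := by
    have h1 : d v = (Finset.univ.filter fun x => G.Adj v x ∧ G.Adj z x).card + P.card :=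
      card_split (fun y => G.Adj v y) (fun y => G.Adj z y)
    have h2 : d z = (Finset.univ.filter fun x => G.Adj z x ∧ G.Adj v x).card + Q.card :=
      card_split (fun y => G.Adj z y) (fun y => G.Adj v y)
    have h3 : d z ≤ d v := hv z (Finset.mem_univ z)
    have h4 : (Finset.univ.filter fun y => G.Adj v y ∧ G.Adj z y).card
        = (Finset.univ.filter fun y => G.Adj z y ∧ G.Adj v y).card := by
      congr 1
      ext y
      simp only [Finset.mem_filter, Finset.mem_univ, true_and, and_comm]
    omega
  have hcard : ((P ∪ Q) \ {v, z}).card ≤ 4 := by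
    have h1 := Finset.card_le_card (Finset.sdiff_subset (s := P ∪ Q) (t := {v, z}))
    have h2 := Finset.card_union_le P Q
    omega
  have hA : ∀ x, x ∉ (P ∪ Q) \ {v, z} → x ≠ v → x ≠ z → (G.Adj v x ↔ G.Adj z x) := by
    intro x hx hxv hxz
    simp only [Finset.mem_sdiff, Finset.mem_union, hP, hQ, Finset.mem_filter, Finset.mem_univ,
      true_and, Finset.mem_insert, Finset.mem_singleton, hxv, hxz, or_self, not_false_eq_true,
      and_true] at hx
    tauto
  refine hz ?_
  have := hrig (Equiv.swap v z) _ hcard ?_ v (by simp)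
  · simpa using this
  · intro x y hx hy
    have hAx := hA x hx
    have hAy := hA y hy
    by_cases hxv : x = v
    · subst hxv
      by_cases hyv : y = x
      · subst hyv; simp
      by_cases hyz : y = z
      · subst hyz; simp [G.adj_comm]
      rw [Equiv.swap_apply_left, Equiv.swap_apply_of_ne_of_ne hyv hyz]
      exact hAy hyv hyz
    by_cases hxz : x = z
    · subst hxz
      by_cases hyv : y = v
      · subst hyv; simp [G.adj_comm]
      by_cases hyz : y = x
      · subst hyz; simp
      rw [Equiv.swap_apply_right, Equiv.swap_apply_of_ne_of_ne hyv hyz]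
      exact (hAy hyv hyz).symm
    rw [Equiv.swap_apply_of_ne_of_ne hxv hxz]
    by_cases hyv : y = v
    · subst hyv
      rw [Equiv.swap_apply_left, G.adj_comm x, G.adj_comm x]
      exact hAx hxv hxz
    by_cases hyz : y = z
    · subst hyz
      rw [Equiv.swap_apply_right, G.adj_comm x, G.adj_comm x]
      exact (hAx hxv hxz).symm
    rw [Equiv.swap_apply_of_ne_of_ne hyv hyz]

/-! ### Isolated vertices -/

/-- The potential edges at `v`. -/
noncomputable def incE {n : ℕ} (v : Fin n) : Finset (Sym2 (Fin n)) :=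
  (Finset.univ.erase v).image fun x => s(v, x)

lemma mem_incE {n : ℕ} {v : Fin n} {e : Sym2 (Fin n)} : e ∈ incE v ↔ ∃ x, x ≠ v ∧ s(v, x) = e := by
  simp [incE]

lemma card_incE {n : ℕ} (v : Fin n) : (incE v).card = n - 1 := by
  rw [incE, Finset.card_image_of_injective, Finset.card_erase_of_mem (Finset.mem_univ v)]
  · simp
  · intro x y h
    exact Sym2.congr_right.1 h

lemma incE_subset {n : ℕ} (v : Fin n) : incE v ⊆ allE n := by
  intro e he
  obtain ⟨x, hx, rfl⟩ := mem_incE.1 he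
  exact mk_mem_allE.2 hx.symm

lemma card_incE_union {n : ℕ} {v w : Fin n} (h : v ≠ w) :
    (incE v ∪ incE w).card + 1 = (n - 1) + (n - 1) := by
  have h1 := Finset.card_union_add_card_inter (incE v) (incE w)
  have h2 : incE v ∩ incE w = {s(v, w)} := by
    ext e
    rw [Finset.mem_inter, mem_incE, mem_incE, Finset.mem_singleton]
    constructor
    · rintro ⟨⟨x, hx, rfl⟩, y, hy, hxy⟩
      rw [Sym2.eq_iff] at hxy
      rcases hxy with ⟨h3, h4⟩ | ⟨h3, h4⟩
      · exact absurd h3.symm h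
      · rw [h3]
    · rintro rfl
      exact ⟨⟨w, h.symm, rfl⟩, v, h, Sym2.eq_swap⟩
  rw [h2, Finset.card_singleton, card_incE, card_incE] at h1
  exact h1

/-- The graphs without isolated vertices are rare if `n (1 - p) ^ (n - 1)` is large and `p` is
small: this is Chebyshev's inequality for the number of isolated vertices. -/
lemma gnpProb_no_isolated_le {n : ℕ} {p : ℝ} (hn : 1 ≤ n) (h0 : 0 ≤ p) (h1 : p ≤ 1 / 2) :
    gnpProb n p {G | ∀ v, ∃ x, G.Adj v x} ≤ 1 / (n * (1 - p) ^ (n - 1)) + 2 * p := by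
  have hn0 : (0 : ℝ) < n := by exact_mod_cast hn
  set q : ℝ := (1 - p) ^ (n - 1) with hq
  have hq0 : 0 < q := pow_pos (by linarith) _
  have hp1 : p ≤ 1 := by linarith
  -- `I v` is the indicator function of `v` being isolated
  let I : Fin n → SimpleGraph (Fin n) → ℝ := fun v G =>
    if G ∈ {G : SimpleGraph (Fin n) | ∀ e ∈ incE v, e ∉ G.edgeSet} then 1 else 0
  have hI : ∀ v, gE n p (I v) = q := fun v => by
    have := gnpProb_absent (p := p) (incE_subset v)
    rw [gnpProb_eq, card_incE] at this
    rw [hq, ← this]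
    congr 1
    funext G
    simp only [I]
    congr 1
  have hII : ∀ v w, v ≠ w → gE n p (fun G => I v G * I w G) = q * q / (1 - p) := fun v w hvw => by
    have := gnpProb_absent (p := p) (Finset.union_subset (incE_subset v) (incE_subset w))
    rw [gnpProb_eq] at this
    have hc := card_incE_union hvw
    rw [eq_div_iff (by linarith), hq, ← pow_add, ← hc, pow_succ, ← this]
    congr 2
    funext G
    simp only [I, Set.mem_ofPred_eq, Finset.mem_union, or_imp, forall_and]
    rw [ite_and]
    split_ifs <;> simp
  have hI2 : ∀ v, gE n p (fun G => I v G * I v G) = q := fun v => by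
    rw [← hI v]
    congr 1
    funext G
    simp only [I]
    split_ifs <;> simp
  have hX2 : gE n p (fun G => (∑ v, I v G) ^ 2) ≤ n * q + n * n * (q * q / (1 - p)) := by
    have e1 : (fun G => (∑ v, I v G) ^ 2) = fun G => ∑ v, ∑ w, I v G * I w G := by
      funext G
      rw [sq, Finset.sum_mul_sum]
    have hpos : 0 ≤ q * q / (1 - p) := div_nonneg (by positivity) (by linarith)
    rw [e1, gE_sum]
    have e2 : ∀ v : Fin n, gE n p (fun G => ∑ w, I v G * I w G) ≤ q + n * (q * q / (1 - p)) := by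
      intro v
      rw [gE_sum, ← Finset.add_sum_erase _ _ (Finset.mem_univ v), hI2]
      rw [Finset.sum_congr rfl fun w hw => hII v w (Finset.ne_of_mem_erase hw).symm]
      rw [Finset.sum_const, nsmul_eq_mul]
      have : (((Finset.univ.erase v).card : ℕ) : ℝ) ≤ n := by
        have := Finset.card_le_univ (Finset.univ.erase v)
        rw [Fintype.card_fin] at this
        exact_mod_cast this
      gcongr
    refine (Finset.sum_le_sum fun v _ => e2 v).trans (le_of_eq ?_)
    rw [Finset.sum_const, Finset.card_univ, Fintype.card_fin, nsmul_eq_mul]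
    ring
  have hX : gE n p (fun G => ∑ v, I v G) = n * q := by
    rw [gE_sum, Finset.sum_congr rfl fun v _ => hI v]
    simp
  have hle : gnpProb n p {G | ∀ v, ∃ x, G.Adj v x}
      ≤ gE n p (fun G => ((1 / (n * q) ^ 2) * (∑ v, I v G) ^ 2 + (-2 / (n * q)) * ∑ v, I v G) + 1) := by
    have hsq : ∀ t : ℝ, ((1 / (n * q) ^ 2) * t ^ 2 + (-2 / (n * q)) * t) + 1
        = (t / (n * q) - 1) ^ 2 := fun t => by field_simp; ring
    refine gnpProb_le_gE h0 hp1 (fun G => ?_) fun G hG => ?_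
    · rw [hsq]; positivity
    · have : ∑ v, I v G = 0 := by
        refine Finset.sum_eq_zero fun v _ => if_neg ?_
        intro h
        obtain ⟨x, hx⟩ := hG v
        exact h s(v, x) (mem_incE.2 ⟨x, hx.ne', rfl⟩) hx
      rw [this]
      norm_num
  rw [gE_add, gE_add, gE_const_mul, gE_const_mul, gE_one, hX] at hle
  have h2 : 1 / (1 - p) ≤ 1 + 2 * p := by
    rw [div_le_iff₀ (by linarith)]
    nlinarith
  calc _ ≤ _ := hle
    _ ≤ (1 / (n * q) ^ 2) * (n * q + n * n * (q * q / (1 - p))) + (-2 / (n * q)) * (n * q) + 1 := by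
      gcongr
    _ = 1 / (n * q) + (1 / (1 - p) - 1) := by
      have : (1 - p) ≠ 0 := by linarith
      field_simp
      ring
    _ ≤ _ := by linarith

lemma gnpProb_not_reconstructible_le_sparse {n : ℕ} {p : ℝ} (hn : 3 ≤ n) (h0 : 0 ≤ p)
    (h1 : p ≤ 1 / 2) :
    gnpProb n p {G | ¬ Reconstructible G} ≤ 1 / (n * (1 - p) ^ (n - 1)) + 2 * p := by
  refine (gnpProb_mono h0 (by linarith) fun G hG => ?_).trans
    (gnpProb_no_isolated_le (by omega) h0 h1)
  intro v
  by_contra hcon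
  push Not at hcon
  exact hG (reconstructible_of_isolated (by simpa using hn) v hcon)

/-! ### Sums over maps, and complements -/

/-- The generating function of the number of moved points over all self-maps other than the
identity. -/
lemma sum_moved_le (n : ℕ) {y : ℝ} (hy : 0 ≤ y) :
    ∑ g ∈ Finset.univ.filter (fun g : Fin n → Fin n => (moved g).Nonempty), y ^ (moved g).card
      ≤ Real.exp (n ^ 2 * y) - 1 := by
  have h1 : ∑ g : Fin n → Fin n, y ^ (moved g).card ≤ Real.exp (n ^ 2 * y) := by
    have e1 : ∀ g : Fin n → Fin n, y ^ (moved g).card = ∏ x, if g x = x then 1 else y := by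
      intro g
      rw [moved, Finset.prod_ite, Finset.prod_const_one, one_mul, Finset.prod_const]
      congr 2
      ext x
      simp
    rw [Finset.sum_congr rfl fun g _ => e1 g]
    have e2 := Finset.prod_univ_sum (fun _ : Fin n => (Finset.univ : Finset (Fin n)))
      (fun x z => if z = x then (1 : ℝ) else y)
    rw [Fintype.piFinset_univ] at e2
    rw [← e2]
    have e3 : ∀ x : Fin n, ∑ z : Fin n, (if z = x then (1 : ℝ) else y) ≤ Real.exp (n * y) := by
      intro x
      have : ∑ z : Fin n, (if z = x then (1 : ℝ) else y) ≤ ∑ z : Fin n, ((if z = x then 1 else 0) + y) :=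
        Finset.sum_le_sum fun z _ => by split_ifs <;> linarith
      refine this.trans ?_
      rw [Finset.sum_add_distrib]
      simp only [Finset.sum_ite_eq', Finset.mem_univ, if_true, Finset.sum_const, Finset.card_univ,
        Fintype.card_fin, nsmul_eq_mul]
      rw [add_comm]
      exact Real.add_one_le_exp _
    refine (Finset.prod_le_prod (fun x _ => Finset.sum_nonneg fun z _ => by split_ifs <;> linarith)
      fun x _ => e3 x).trans (le_of_eq ?_)
    rw [Finset.prod_const, Finset.card_univ, Fintype.card_fin, ← Real.exp_nat_mul]
    congr 1
    ring
  rw [← Finset.sum_filter_add_sum_filter_not _ (fun g : Fin n → Fin n => (moved g).Nonempty)] at h1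
  have h2 : (1 : ℝ) ≤ ∑ g ∈ Finset.univ.filter (fun g : Fin n → Fin n => ¬ (moved g).Nonempty),
      y ^ (moved g).card := by
    have hid : (moved (id : Fin n → Fin n)) = ∅ := by simp [moved]
    have := Finset.single_le_sum (f := fun g : Fin n → Fin n => y ^ (moved g).card)
      (s := Finset.univ.filter (fun g : Fin n → Fin n => ¬ (moved g).Nonempty))
      (fun g _ => pow_nonneg hy _) (a := id) (by simp [hid])
    simpa [hid] using this
  linarith

lemma gnpProb_compl_eq (n : ℕ) (p : ℝ) (A : Set (SimpleGraph (Fin n))) :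
    gnpProb n (1 - p) {G | Gᶜ ∈ A} = gnpProb n p A := by
  have hw : ∀ G : SimpleGraph (Fin n), gnpWeight n (1 - p) Gᶜ = gnpWeight n p G := by
    intro G
    have h1 : edgeCount Gᶜ = n.choose 2 - edgeCount G := by
      refine (congrArg Finset.card (?_ : _ = allE n \ G.edgeFinset)).trans ?_
      · ext e
        induction e with | _ x y
        simp [mk_mem_allE, SimpleGraph.compl_adj]
      · rw [Finset.card_sdiff_of_subset (edgeFinset_subset_allE G), card_allE, edgeCount]
    have h2 : edgeCount G ≤ n.choose 2 := by
      rw [← card_allE]; exact Finset.card_le_card (edgeFinset_subset_allE G)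
    rw [gnpWeight, gnpWeight, h1, Nat.sub_sub_self h2]
    ring
  rw [gnpProb, gnpProb]
  refine Finset.sum_bij' (fun G _ => Gᶜ) (fun G _ => Gᶜ) (by simp) (by simp) (by simp) (by simp) ?_
  intro G _
  simp only [Set.mem_ofPred_eq]
  rw [← hw Gᶜ, compl_compl]

lemma gnpProb_not_reconstructible_compl (n : ℕ) (p : ℝ) :
    gnpProb n (1 - p) {G | ¬ Reconstructible G} = gnpProb n p {G | ¬ Reconstructible G} := by
  rw [← gnpProb_compl_eq n p]
  congr 1
  ext G
  simp only [Set.mem_ofPred_eq]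
  exact not_congr ⟨Reconstructible.compl, fun h => by simpa using h.compl⟩

/-! ### The bad events for `p` of order `log n / n` -/

/-- Few present edges in a set `W` are unlikely, also jointly with the presence of the edges of a
set `F` disjoint from `W`: compare with the expectation of `10 ^ (-|E(G) ∩ W|)`. -/
lemma gnpProb_present_few {n : ℕ} {p : ℝ} (h0 : 0 ≤ p) (h1 : p ≤ 1)
    {F W : Finset (Sym2 (Fin n))} (hF : F ⊆ allE n) (hW : W ⊆ allE n) (hd : Disjoint F W) (k : ℕ) :
    gnpProb n p {G | (∀ e ∈ F, e ∈ G.edgeSet) ∧ (W.filter fun e => e ∈ G.edgeSet).card ≤ k}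
      ≤ 10 ^ k * (p ^ F.card * (1 - 9 / 10 * p) ^ W.card) := by
  have key := gE_prod (p := p) (Finset.union_subset hF hW)
    (fun e => if e ∈ F then 1 else 1 / 10) (fun e => if e ∈ F then 0 else 1)
  have hnot : ∀ e ∈ W, e ∉ F := fun e he heF => Finset.disjoint_left.1 hd heF he
  have hr : ∏ e ∈ F ∪ W, (p * (if e ∈ F then 1 else 1 / 10) + (1 - p) * (if e ∈ F then 0 else 1))
      = p ^ F.card * (1 - 9 / 10 * p) ^ W.card := by
    rw [Finset.prod_union hd]
    congr 1
    · rw [← Finset.prod_const]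
      exact Finset.prod_congr rfl fun e he => by simp [he]
    · rw [← Finset.prod_const]
      refine Finset.prod_congr rfl fun e he => ?_
      rw [if_neg (hnot e he), if_neg (hnot e he)]
      ring
  rw [← hr, ← key, ← gE_const_mul]
  refine gnpProb_le_gE h0 h1 (fun G => ?_) fun G hG => ?_
  · refine mul_nonneg (by positivity) (Finset.prod_nonneg fun e _ => ?_)
    split_ifs <;> norm_num
  · obtain ⟨hGF, hGW⟩ := hG
    rw [Finset.prod_union hd]
    have e1 : (∏ e ∈ F, if e ∈ G.edgeSet then (if e ∈ F then (1 : ℝ) else 1 / 10)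
        else (if e ∈ F then 0 else 1)) = 1 :=
      Finset.prod_eq_one fun e he => by rw [if_pos (hGF e he), if_pos he]
    have e2 : (∏ e ∈ W, if e ∈ G.edgeSet then (if e ∈ F then (1 : ℝ) else 1 / 10)
        else (if e ∈ F then 0 else 1)) = (1 / 10) ^ (W.filter fun e => e ∈ G.edgeSet).card := by
      rw [← Finset.prod_const, Finset.prod_filter]
      exact Finset.prod_congr rfl fun e he => by simp [hnot e he]
    rw [e1, e2, one_mul, one_div, inv_pow, ← div_eq_mul_inv, one_le_div (by positivity)]
    exact pow_le_pow_right₀ (by norm_num) hGW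

/-- The set of pairs joining `x` to the vertices of `S`. -/
noncomputable def starE {n : ℕ} (x : Fin n) (S : Finset (Fin n)) : Finset (Sym2 (Fin n)) :=
  S.image fun z => s(x, z)

lemma card_starE {n : ℕ} (x : Fin n) (S : Finset (Fin n)) : (starE x S).card = S.card :=
  Finset.card_image_of_injective _ fun _ _ h => Sym2.congr_right.1 h

lemma mem_starE {n : ℕ} {x : Fin n} {S : Finset (Fin n)} {e : Sym2 (Fin n)} :
    e ∈ starE x S ↔ ∃ z ∈ S, s(x, z) = e := by simp [starE]

lemma starE_subset {n : ℕ} {x : Fin n} {S : Finset (Fin n)} (h : x ∉ S) : starE x S ⊆ allE n := by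
  intro e he
  obtain ⟨z, hz, rfl⟩ := mem_starE.1 he
  exact mk_mem_allE.2 fun hxz => h (hxz ▸ hz)

lemma disjoint_starE {n : ℕ} {x y : Fin n} {S T : Finset (Fin n)} (hxy : x ≠ y) (h : x ∉ T) :
    Disjoint (starE x S) (starE y T) := by
  rw [Finset.disjoint_left]
  intro e he he'
  obtain ⟨z, hz, rfl⟩ := mem_starE.1 he
  obtain ⟨w, hw, hzw⟩ := mem_starE.1 he'
  rw [Sym2.eq_iff] at hzw
  rcases hzw with ⟨h1, h2⟩ | ⟨h1, h2⟩
  · exact hxy h1.symm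
  · exact h (h2 ▸ hw)

lemma card_filter_starE_le {n : ℕ} (G : SimpleGraph (Fin n)) (x : Fin n) (S : Finset (Fin n)) :
    ((starE x S).filter fun e => e ∈ G.edgeSet).card
      ≤ (Finset.univ.filter fun y => G.Adj x y).card := by
  rw [← card_starE x (Finset.univ.filter fun y => G.Adj x y)]
  refine Finset.card_le_card fun e he => ?_
  rw [Finset.mem_filter, mem_starE] at he
  obtain ⟨⟨z, -, rfl⟩, h⟩ := he
  exact mem_starE.2 ⟨z, by simpa using h, rfl⟩

lemma gnpProb_codegree_le {n : ℕ} {p : ℝ} (h0 : 0 ≤ p) (h1 : p ≤ 1) :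
    gnpProb n p {G | ∃ x y, x ≠ y ∧ 6 ≤ (Finset.univ.filter fun z => G.Adj x z ∧ G.Adj y z).card}
      ≤ n ^ 8 * p ^ 12 := by
  let s : Finset ((Fin n × Fin n) × Finset (Fin n)) :=
    (Finset.univ ×ˢ Finset.univ.powersetCard 6).filter fun i =>
      i.1.1 ≠ i.1.2 ∧ i.1.1 ∉ i.2 ∧ i.1.2 ∉ i.2
  refine (gnpProb_biUnion_le h0 h1 s _ (fun i => {G | ∀ e ∈ starE i.1.1 i.2 ∪ starE i.1.2 i.2,
    e ∈ G.edgeSet}) ?_).trans ?_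
  · rintro G ⟨x, y, hxy, h6⟩
    obtain ⟨Z, hZ, hZ6⟩ := Finset.exists_subset_card_eq h6
    have hZ' : ∀ z ∈ Z, G.Adj x z ∧ G.Adj y z := fun z hz => (Finset.mem_filter.1 (hZ hz)).2
    refine ⟨((x, y), Z), ?_, ?_⟩
    · simp only [s, Finset.mem_filter, Finset.mem_product, Finset.mem_univ, true_and,
        Finset.mem_powersetCard, Finset.subset_univ]
      exact ⟨hZ6, hxy, fun h => (hZ' x h).1.ne rfl, fun h => (hZ' y h).2.ne rfl⟩
    · intro e he
      rcases Finset.mem_union.1 he with he | he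
      · obtain ⟨z, hz, rfl⟩ := mem_starE.1 he
        exact (hZ' z hz).1
      · obtain ⟨z, hz, rfl⟩ := mem_starE.1 he
        exact (hZ' z hz).2
  · have hi : ∀ i ∈ s, gnpProb n p {G | ∀ e ∈ starE i.1.1 i.2 ∪ starE i.1.2 i.2,
        e ∈ G.edgeSet} = p ^ 12 := by
      intro i hi
      simp only [s, Finset.mem_filter, Finset.mem_product, Finset.mem_univ, true_and,
        Finset.mem_powersetCard, Finset.subset_univ] at hi
      obtain ⟨hc, hne, hx, hy⟩ := hi
      rw [gnpProb_present (Finset.union_subset (starE_subset hx) (starE_subset hy)),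
        Finset.card_union_of_disjoint (disjoint_starE hne hx), card_starE, card_starE, hc]
    rw [Finset.sum_congr rfl hi, Finset.sum_const, nsmul_eq_mul]
    have hs : s.card ≤ n ^ 8 := by
      refine (Finset.card_filter_le _ _).trans ?_
      rw [Finset.card_product, Finset.card_powersetCard, Finset.card_univ, Finset.card_univ,
        Fintype.card_prod, Fintype.card_fin]
      calc _ ≤ n * n * n ^ 6 := Nat.mul_le_mul_left _ (Nat.choose_le_pow _ _)
        _ = n ^ 8 := by ring
    have : (s.card : ℝ) ≤ n ^ 8 := by exact_mod_cast hs
    gcongr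

lemma gnpProb_low_pair_le {n : ℕ} {p : ℝ} (h0 : 0 ≤ p) (h1 : p ≤ 1) :
    gnpProb n p {G | ∃ u x y, x ≠ y ∧ G.Adj u x ∧ G.Adj u y ∧ x ∈ lowSet G ∧ y ∈ lowSet G}
      ≤ n ^ 3 * (10 ^ 66 * (p ^ 2 * (1 - 9 / 10 * p) ^ (2 * (n - 3)))) := by
  let s : Finset (Fin n × Fin n × Fin n) :=
    Finset.univ.filter fun i => i.1 ≠ i.2.1 ∧ i.1 ≠ i.2.2 ∧ i.2.1 ≠ i.2.2
  let F : Fin n × Fin n × Fin n → Finset (Sym2 (Fin n)) := fun i => starE i.1 {i.2.1, i.2.2}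
  let S : Fin n × Fin n × Fin n → Finset (Fin n) := fun i => Finset.univ \ {i.1, i.2.1, i.2.2}
  let W : Fin n × Fin n × Fin n → Finset (Sym2 (Fin n)) := fun i =>
    starE i.2.1 (S i) ∪ starE i.2.2 (S i)
  refine (gnpProb_biUnion_le h0 h1 s _ (fun i => {G | (∀ e ∈ F i, e ∈ G.edgeSet) ∧
    ((W i).filter fun e => e ∈ G.edgeSet).card ≤ 66}) ?_).trans ?_
  · rintro G ⟨u, x, y, hxy, hux, huy, hx, hy⟩
    refine ⟨(u, x, y), ?_, ?_, ?_⟩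
    · simp only [s, Finset.mem_filter, Finset.mem_univ, true_and]
      exact ⟨hux.ne, huy.ne, hxy⟩
    · intro e he
      obtain ⟨z, hz, rfl⟩ := mem_starE.1 he
      simp only [Finset.mem_insert, Finset.mem_singleton] at hz
      rcases hz with rfl | rfl
      · exact hux
      · exact huy
    · simp only [lowSet, Finset.mem_filter, Finset.mem_univ, true_and] at hx hy
      have e1 := card_filter_starE_le G x (S (u, x, y))
      have e2 := card_filter_starE_le G y (S (u, x, y))
      have e3 := Finset.card_union_le ((starE x (S (u, x, y))).filter fun e => e ∈ G.edgeSet)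
        ((starE y (S (u, x, y))).filter fun e => e ∈ G.edgeSet)
      rw [← Finset.filter_union] at e3
      exact e3.trans ((add_le_add e1 e2).trans (by omega))
  · have hi : ∀ i ∈ s, gnpProb n p {G | (∀ e ∈ F i, e ∈ G.edgeSet) ∧
        ((W i).filter fun e => e ∈ G.edgeSet).card ≤ 66}
        ≤ 10 ^ 66 * (p ^ 2 * (1 - 9 / 10 * p) ^ (2 * (n - 3))) := by
      rintro ⟨u, x, y⟩ hi
      simp only [s, Finset.mem_filter, Finset.mem_univ, true_and] at hi
      obtain ⟨hux, huy, hxy⟩ := hi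
      have hxS : x ∉ S (u, x, y) := by simp [S]
      have hyS : y ∉ S (u, x, y) := by simp [S]
      have hu : u ∉ ({x, y} : Finset (Fin n)) := by simp [hux, huy]
      have huS : u ∉ S (u, x, y) := by simp [S]
      have hS : (S (u, x, y)).card = n - 3 := by
        simp only [S]
        rw [Finset.card_sdiff_of_subset (Finset.subset_univ _), Finset.card_univ, Fintype.card_fin,
          Finset.card_insert_of_notMem hu, Finset.card_pair hxy]
      have hd : Disjoint (F (u, x, y)) (W (u, x, y)) :=
        Finset.disjoint_union_right.2 ⟨disjoint_starE hux huS, disjoint_starE huy huS⟩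
      refine (gnpProb_present_few h0 h1 (starE_subset hu)
        (Finset.union_subset (starE_subset hxS) (starE_subset hyS)) hd 66).trans (le_of_eq ?_)
      rw [Finset.card_union_of_disjoint (disjoint_starE hxy hxS), card_starE, card_starE, card_starE, hS,
        Finset.card_pair hxy, two_mul]
    refine (Finset.sum_le_sum hi).trans ?_
    rw [Finset.sum_const, nsmul_eq_mul]
    have hs : s.card ≤ n ^ 3 := by
      refine (Finset.card_filter_le _ _).trans (le_of_eq ?_)
      rw [Finset.card_univ, Fintype.card_prod, Fintype.card_prod, Fintype.card_fin]
      ring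
    have : (s.card : ℝ) ≤ n ^ 3 := by exact_mod_cast hs
    have h2 : 0 ≤ 1 - 9 / 10 * p := by linarith
    gcongr

lemma gnpProb_many_low_le {n : ℕ} {p : ℝ} (hn : 1 ≤ n) (h0 : 0 ≤ p) (h1 : p ≤ 1) :
    gnpProb n p {G | n ≤ 34 * (lowSet G).card}
      ≤ 34 * (10 ^ 33 * (1 - 9 / 10 * p) ^ (n - 1)) := by
  have hn0 : (0 : ℝ) < n := by exact_mod_cast hn
  have h2 : gnpProb n p {G | n ≤ 34 * (lowSet G).card}
      ≤ gE n p fun G => (34 / n) * ∑ v, if v ∈ lowSet G then 1 else 0 := by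
    refine gnpProb_le_gE h0 h1 (fun G => by positivity) fun G hG => ?_
    rw [Finset.sum_boole, Finset.filter_mem_eq_inter, Finset.univ_inter, div_mul_eq_mul_div,
      one_le_div hn0]
    exact_mod_cast hG
  have h3 : ∀ v : Fin n, gE n p (fun G => if v ∈ lowSet G then 1 else 0)
      ≤ 10 ^ 33 * (1 - 9 / 10 * p) ^ (n - 1) := by
    intro v
    have hv : v ∉ Finset.univ.erase v := by simp
    have := gnpProb_present_few h0 h1 (Finset.empty_subset _) (starE_subset hv)
      (Finset.disjoint_empty_left _) 33
    rw [card_starE, Finset.card_erase_of_mem (Finset.mem_univ v), Finset.card_univ,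
      Fintype.card_fin, Finset.card_empty, pow_zero, one_mul] at this
    refine le_trans ?_ this
    rw [gnpProb_eq]
    refine gE_mono h0 h1 fun G => ?_
    by_cases hG : v ∈ lowSet G
    · rw [if_pos hG, if_pos]
      refine ⟨by simp, (card_filter_starE_le G v _).trans ?_⟩
      simp only [lowSet, Finset.mem_filter, Finset.mem_univ, true_and] at hG
      omega
    · rw [if_neg hG]
      split_ifs <;> norm_num
  refine h2.trans ?_
  rw [gE_const_mul, gE_sum]
  calc _ ≤ 34 / (n : ℝ) * ∑ v : Fin n, 10 ^ 33 * (1 - 9 / 10 * p) ^ (n - 1) := by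
        gcongr with v
        exact h3 v
    _ = _ := by
      rw [Finset.sum_const, Finset.card_univ, Fintype.card_fin, nsmul_eq_mul]
      field_simp

/-- There are at most `m ^ (4 * m)` sets of `4 * m` pairs in a set of `m` vertices. -/
lemma choose_le_pow_self {m N : ℕ} (hm : 1 ≤ m) (hN : N ≤ m ^ 2) :
    (N.choose (4 * m) : ℝ) ≤ (m : ℝ) ^ (4 * m) := by
  have hm0 : (0 : ℝ) < m := by exact_mod_cast hm
  have h1 : (N.choose (4 * m) : ℝ) ≤ (N : ℝ) ^ (4 * m) / (4 * m).factorial :=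
    Nat.choose_le_pow_div (4 * m) N
  have h2 := Real.pow_div_factorial_le_exp ((4 * m : ℕ) : ℝ) (by positivity) (4 * m)
  have hf : (0 : ℝ) < (4 * m).factorial := by exact_mod_cast Nat.factorial_pos _
  have h3 : Real.exp ((4 * m : ℕ) : ℝ) ≤ 4 ^ (4 * m) := by
    have : Real.exp ((4 * m : ℕ) : ℝ) = Real.exp 1 ^ (4 * m) := by
      rw [← Real.exp_nat_mul, mul_one]
    rw [this]
    have := Real.exp_one_lt_d9
    gcongr
    linarith
  have h4 : (N : ℝ) ≤ m ^ 2 := by exact_mod_cast hN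
  rw [div_le_iff₀ hf] at h2
  refine h1.trans ?_
  rw [div_le_iff₀ hf]
  have h5 : (m : ℝ) ^ (4 * m) * 4 ^ (4 * m) ≤ 4 ^ (4 * m) * (4 * m).factorial := by
    have e : (m : ℝ) ^ (4 * m) * 4 ^ (4 * m) = ((4 * m : ℕ) : ℝ) ^ (4 * m) := by
      rw [← mul_pow]; push_cast; ring
    rw [e]
    exact h2.trans (by gcongr)
  have h6 : (m : ℝ) ^ (4 * m) ≤ (4 * m).factorial := by
    have : (0 : ℝ) < 4 ^ (4 * m) := by positivity
    nlinarith
  calc (N : ℝ) ^ (4 * m) ≤ (m ^ 2 : ℝ) ^ (4 * m) := by gcongr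
    _ = (m : ℝ) ^ (4 * m) * (m : ℝ) ^ (4 * m) := by rw [← pow_mul, ← pow_add]; ring_nf
    _ ≤ _ := by gcongr

lemma gnpProb_witness_le {n : ℕ} {p : ℝ} (h0 : 0 ≤ p) (h1 : p ≤ 1) :
    gnpProb n p {G | ∃ g : Fin n → Fin n, (moved g).Nonempty ∧ ∃ E', IsWitness G g E'}
      ≤ Real.exp (n ^ 2 * (n * p ^ 2) ^ 4) - 1 := by
  refine (gnpProb_biUnion_le h0 h1 (Finset.univ.filter fun g : Fin n → Fin n => (moved g).Nonempty)
    _ (fun g => {G | ∃ E', IsWitness G g E'}) ?_).trans ?_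
  · rintro G ⟨g, hg, hE⟩
    exact ⟨g, by simpa using hg, hE⟩
  refine le_trans (Finset.sum_le_sum fun g hg => ?_) (sum_moved_le n (by positivity))
  have hm : 1 ≤ (moved g).card := Finset.card_pos.2 (Finset.mem_filter.1 hg).2
  set m := (moved g).card with hmdef
  let s : Finset (Finset (Sym2 (Fin n))) := ((moved g).sym2.powersetCard (4 * m)).filter fun E' =>
    E' ∪ E'.image (Sym2.map g) ⊆ allE n ∧ Disjoint E' (E'.image (Sym2.map g)) ∧
      Set.InjOn (Sym2.map g) E'
  refine (gnpProb_biUnion_le h0 h1 s _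
    (fun E' => {G | ∀ e ∈ E' ∪ E'.image (Sym2.map g), e ∈ G.edgeSet}) ?_).trans ?_
  · rintro G ⟨E', hE'⟩
    have hedge : ∀ e ∈ E' ∪ E'.image (Sym2.map g), e ∈ G.edgeSet := by
      intro e he
      rcases Finset.mem_union.1 he with he | he
      · exact hE'.edge e he
      · obtain ⟨e', he', rfl⟩ := Finset.mem_image.1 he
        exact hE'.edge_map _ he'
    refine ⟨E', ?_, hedge⟩
    simp only [s, Finset.mem_filter, Finset.mem_powersetCard]
    refine ⟨⟨fun e he => Finset.mem_sym2_iff.2 (hE'.sub e he), hE'.card⟩, fun e he => ?_,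
      hE'.disj, hE'.inj⟩
    exact mem_allE.2 (G.not_isDiag_of_mem_edgeSet (hedge e he))
  · have hi : ∀ E' ∈ s, gnpProb n p {G | ∀ e ∈ E' ∪ E'.image (Sym2.map g), e ∈ G.edgeSet}
        = p ^ (8 * m) := by
      intro E' hE'
      simp only [s, Finset.mem_filter, Finset.mem_powersetCard] at hE'
      obtain ⟨⟨-, hc⟩, hsub, hdis, hinj⟩ := hE'
      rw [gnpProb_present hsub, Finset.card_union_of_disjoint hdis, Finset.card_image_of_injOn hinj,
        hc]
      congr 1
      omega
    rw [Finset.sum_congr rfl hi, Finset.sum_const, nsmul_eq_mul]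
    have hs : (s.card : ℝ) ≤ (m : ℝ) ^ (4 * m) := by
      refine le_trans ?_ (choose_le_pow_self (N := (moved g).sym2.card) hm ?_)
      · have := Finset.card_filter_le ((moved g).sym2.powersetCard (4 * m)) fun E' =>
          E' ∪ E'.image (Sym2.map g) ⊆ allE n ∧ Disjoint E' (E'.image (Sym2.map g)) ∧
            Set.InjOn (Sym2.map g) E'
        rw [Finset.card_powersetCard] at this
        exact_mod_cast this
      · rw [Finset.card_sym2, ← hmdef, Nat.choose_two_right]
        refine Nat.div_le_of_le_mul ?_
        simp only [Nat.add_sub_cancel]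
        nlinarith
    have hmn : (m : ℝ) ≤ n := by
      have := Finset.card_le_univ (moved g)
      rw [Fintype.card_fin] at this
      exact_mod_cast this
    calc (s.card : ℝ) * p ^ (8 * m) ≤ (n : ℝ) ^ (4 * m) * p ^ (8 * m) := by
          have : (m : ℝ) ^ (4 * m) ≤ (n : ℝ) ^ (4 * m) := by gcongr
          have := hs.trans this
          gcongr
      _ = ((n * p ^ 2) ^ 4) ^ m := by ring

/-- The union of the four bad events covers all graphs that are not reconstructible. -/
lemma gnpProb_not_reconstructible_le_mid {n : ℕ} {p : ℝ} (hn : 3 ≤ n) (h0 : 0 ≤ p) (h1 : p ≤ 1) :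
    gnpProb n p {G | ¬ Reconstructible G} ≤ n ^ 8 * p ^ 12
      + n ^ 3 * (10 ^ 66 * (p ^ 2 * (1 - 9 / 10 * p) ^ (2 * (n - 3))))
      + 34 * (10 ^ 33 * (1 - 9 / 10 * p) ^ (n - 1))
      + (Real.exp (n ^ 2 * (n * p ^ 2) ^ 4) - 1) := by
  refine (gnpProb_mono h0 h1 (B := (({G | ∃ x y, x ≠ y ∧
    6 ≤ (Finset.univ.filter fun z => G.Adj x z ∧ G.Adj y z).card} ∪
    {G | ∃ u x y, x ≠ y ∧ G.Adj u x ∧ G.Adj u y ∧ x ∈ lowSet G ∧ y ∈ lowSet G}) ∪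
    {G | n ≤ 34 * (lowSet G).card}) ∪
    {G | ∃ g : Fin n → Fin n, (moved g).Nonempty ∧ ∃ E', IsWitness G g E'}) ?_).trans ?_
  · intro G hG
    by_contra hcon
    simp only [Set.mem_union, Set.mem_ofPred_eq, not_or] at hcon
    obtain ⟨⟨⟨c1, c2⟩, c3⟩, c4⟩ := hcon
    refine hG (reconstructible_of_sparse hn (fun x y hxy => ?_) (fun u x y hxy hux huy hx hy => ?_)
      (fun g hg E' hE' => ?_) (not_le.1 c3))
    · by_contra hc
      exact c1 ⟨x, y, hxy, by omega⟩
    · exact c2 ⟨u, x, y, hxy, hux, huy, hx, hy⟩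
    · exact c4 ⟨g, hg, E', hE'⟩
  · refine (gnpProb_union_le h0 h1 _ _).trans (add_le_add ?_ (gnpProb_witness_le h0 h1))
    refine (gnpProb_union_le h0 h1 _ _).trans (add_le_add ?_ (gnpProb_many_low_le (by omega) h0 h1))
    exact (gnpProb_union_le h0 h1 _ _).trans (add_le_add (gnpProb_codegree_le h0 h1)
      (gnpProb_low_pair_le h0 h1))

/-! ### The bad event for larger `p` -/

/-- If `E'` and its image under `f` are disjoint, the events `e ∈ G ↔ f e ∈ G` for `e ∈ E'` are
independent, of probability `p² + (1 - p)² ≤ 1 - p`. -/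
lemma gnpProb_iff_le {n : ℕ} {p : ℝ} (h0 : 0 ≤ p) (h1 : p ≤ 1 / 2) {E' : Finset (Sym2 (Fin n))}
    {f : Sym2 (Fin n) → Sym2 (Fin n)} (hE : E' ⊆ allE n) (hfE : E'.image f ⊆ allE n)
    (hd : Disjoint E' (E'.image f)) (hinj : Set.InjOn f E') :
    gnpProb n p {G | ∀ e ∈ E', e ∈ G.edgeSet ↔ f e ∈ G.edgeSet} ≤ (1 - p) ^ E'.card := by
  have hp1 : p ≤ 1 := by linarith
  refine (gnpProb_biUnion_le h0 hp1 E'.powerset _ (fun S => {G | (∀ e ∈ S ∪ S.image f, e ∈ G.edgeSet) ∧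
    ∀ e ∈ (E' \ S) ∪ (E' \ S).image f, e ∉ G.edgeSet}) ?_).trans ?_
  -- sum over the set `S` of the pairs of `E'` that are edges of `G`
  · intro G hG
    refine ⟨E'.filter fun e => e ∈ G.edgeSet, Finset.mem_powerset.2 (Finset.filter_subset _ _),
      fun e he => ?_, fun e he => ?_⟩
    · rcases Finset.mem_union.1 he with h | h
      · exact (Finset.mem_filter.1 h).2
      · obtain ⟨e', h', rfl⟩ := Finset.mem_image.1 h
        obtain ⟨h2, h3⟩ := Finset.mem_filter.1 h'
        exact (hG e' h2).1 h3
    · have key : ∀ e' ∈ E' \ E'.filter fun e => e ∈ G.edgeSet, e' ∈ E' ∧ e' ∉ G.edgeSet := by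
        intro e' h
        simp only [Finset.mem_sdiff, Finset.mem_filter, not_and] at h
        exact ⟨h.1, h.2 h.1⟩
      rcases Finset.mem_union.1 he with h | h
      · exact (key e h).2
      · obtain ⟨e', h', rfl⟩ := Finset.mem_image.1 h
        obtain ⟨h2, h3⟩ := key e' h'
        exact fun hcon => h3 ((hG e' h2).2 hcon)
  · have hS : ∀ S ∈ E'.powerset, gnpProb n p {G | (∀ e ∈ S ∪ S.image f, e ∈ G.edgeSet) ∧
        ∀ e ∈ (E' \ S) ∪ (E' \ S).image f, e ∉ G.edgeSet}
        = (p ^ 2) ^ S.card * ((1 - p) ^ 2) ^ (E'.card - S.card) := by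
      intro S hS
      rw [Finset.mem_powerset] at hS
      have hT : E' \ S ⊆ E' := Finset.sdiff_subset
      have hSi := Finset.image_subset_image (f := f) hS
      have hTi := Finset.image_subset_image (f := f) hT
      have d1 : Disjoint S (S.image f) := hd.mono hS hSi
      have d2 : Disjoint (E' \ S) ((E' \ S).image f) := hd.mono hT hTi
      have d3 : Disjoint (S.image f) ((E' \ S).image f) := by
        rw [Finset.disjoint_left]
        intro e he he'
        obtain ⟨a, ha, rfl⟩ := Finset.mem_image.1 he
        obtain ⟨b, hb, hab⟩ := Finset.mem_image.1 he'
        have : b = a := hinj (hT hb) (hS ha) hab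
        subst this
        exact (Finset.mem_sdiff.1 hb).2 ha
      rw [gnpProb_cyl (Finset.union_subset (hS.trans hE) (hSi.trans hfE))
        (Finset.union_subset (hT.trans hE) (hTi.trans hfE)),
        Finset.card_union_of_disjoint d1, Finset.card_union_of_disjoint d2,
        Finset.card_image_of_injOn (hinj.mono hS), Finset.card_image_of_injOn (hinj.mono hT),
        Finset.card_sdiff_of_subset hS, ← two_mul, ← two_mul, pow_mul, pow_mul]
      refine Finset.disjoint_union_left.2 ⟨Finset.disjoint_union_right.2 ⟨?_, ?_⟩,
        Finset.disjoint_union_right.2 ⟨?_, d3⟩⟩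
      · exact Finset.disjoint_sdiff
      · exact hd.mono hS hTi
      · exact (hd.mono hT hSi).symm
    rw [Finset.sum_congr rfl hS, Finset.sum_pow_mul_eq_add_pow]
    have : p ^ 2 + (1 - p) ^ 2 ≤ 1 - p := by nlinarith
    gcongr

/-- A map that is injective off `A` and moves `m` points moves about `m n / 2` pairs; a third of
them form a set disjoint from its image. -/
lemma exists_pairs {n : ℕ} {g : Fin n → Fin n} {A : Finset (Fin n)} (hA : A.card ≤ 4)
    (hinj : Set.InjOn g {x | x ∉ A}) (hgA : ∀ x ∈ A, g x = x) :
    ∃ E' : Finset (Sym2 (Fin n)), E' ⊆ allE n ∧ E'.image (Sym2.map g) ⊆ allE n ∧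
      Disjoint E' (E'.image (Sym2.map g)) ∧ Set.InjOn (Sym2.map g) E' ∧
      (∀ e ∈ E', ∀ x ∈ e, x ∉ A) ∧ (moved g).card * (n - 6) ≤ 6 * E'.card := by
  obtain ⟨F, hF⟩ : ∃ F : SimpleGraph (Fin n), ∀ x y, F.Adj x y ↔
      x ≠ y ∧ x ∉ A ∧ y ∉ A ∧ Sym2.map g s(x, y) ≠ s(x, y) := by
    refine ⟨⟨fun x y => x ≠ y ∧ x ∉ A ∧ y ∉ A ∧ Sym2.map g s(x, y) ≠ s(x, y), ⟨?_⟩, ⟨?_⟩⟩,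
      fun x y => Iff.rfl⟩
    · rintro x y ⟨h1, h2, h3, h4⟩
      refine ⟨h1.symm, h3, h2, ?_⟩
      rwa [Sym2.eq_swap]
    · intro x h
      exact h.1 rfl
  have hFA : ∀ e ∈ F.edgeFinset, ∀ x ∈ e, x ∉ A := by
    intro e he
    induction e with | _ x y
    rw [SimpleGraph.mem_edgeFinset, SimpleGraph.mem_edgeSet, hF] at he
    intro z hz
    rw [Sym2.mem_iff] at hz
    rcases hz with rfl | rfl
    · exact he.2.1
    · exact he.2.2.1
  have hinjF : Set.InjOn (Sym2.map g) F.edgeFinset := (map_injOn hinj).mono fun e he => hFA e he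
  obtain ⟨E', hE', hc, hd⟩ := exists_indep F.edgeFinset (Sym2.map g) hinjF (by
    intro e he
    induction e with | _ x y
    rw [SimpleGraph.mem_edgeFinset, SimpleGraph.mem_edgeSet, hF] at he
    exact he.2.2.2)
  have hdeg := card_edges_ge F (moved g) (n - 6) (by
    intro x hx
    rw [mem_moved] at hx
    have hxA : x ∉ A := fun h => hx (hgA x h)
    have h1 : Finset.univ \ (A ∪ {x, g x}) ⊆ Finset.univ.filter fun y => F.Adj x y := by
      intro y hy
      simp only [Finset.mem_sdiff, Finset.mem_univ, true_and, Finset.mem_union, Finset.mem_insert,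
        Finset.mem_singleton, not_or] at hy
      obtain ⟨h1, h2, h3⟩ := hy
      rw [Finset.mem_filter, hF]
      exact ⟨Finset.mem_univ _, fun h => h2 h.symm, hxA, h1, fun h => h3 (map_eq_self hx h).symm⟩
    have h2 := Finset.card_le_card h1
    rw [Finset.card_sdiff_of_subset (Finset.subset_univ _), Finset.card_univ, Fintype.card_fin] at h2
    have h3 := Finset.card_union_le A {x, g x}
    have h4 : ({x, g x} : Finset (Fin n)).card ≤ 2 := Finset.card_le_two
    omega)
  refine ⟨E', hE'.trans (edgeFinset_subset_allE F), fun e he => ?_, hd, hinjF.mono hE',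
    fun e he => hFA e (hE' he), by omega⟩
  obtain ⟨e', h', rfl⟩ := Finset.mem_image.1 he
  have h2 := hE' h'
  induction e' with | _ x y
  rw [SimpleGraph.mem_edgeFinset, SimpleGraph.mem_edgeSet, hF] at h2
  rw [Sym2.map_mk, mk_mem_allE]
  exact fun h => h2.1 (hinj h2.2.1 h2.2.2.1 h)

lemma card_small_sets_le {n : ℕ} (hn : 1 ≤ n) :
    (Finset.univ.filter fun A : Finset (Fin n) => A.card ≤ 4).card ≤ 5 * n ^ 4 := by
  have h1 : (Finset.univ.filter fun A : Finset (Fin n) => A.card ≤ 4) ⊆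
      (Finset.range 5).biUnion fun k => Finset.univ.powersetCard k := by
    intro A hA
    simp only [Finset.mem_filter, Finset.mem_univ, true_and] at hA
    simp only [Finset.mem_biUnion, Finset.mem_range, Finset.mem_powersetCard, Finset.subset_univ,
      true_and]
    exact ⟨A.card, by omega, rfl⟩
  refine (Finset.card_le_card h1).trans ((Finset.card_biUnion_le_card_mul _ _ (n ^ 4) ?_).trans
    (by simp))
  intro k hk
  rw [Finset.mem_range] at hk
  rw [Finset.card_powersetCard, Finset.card_univ, Fintype.card_fin]
  exact (Nat.choose_le_pow _ _).trans (Nat.pow_le_pow_right hn (by omega))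

lemma gnpProb_not_reconstructible_le_dense {n : ℕ} {p : ℝ} (hn : 6 ≤ n) (h0 : 0 ≤ p)
    (h1 : p ≤ 1 / 2) :
    gnpProb n p {G | ¬ Reconstructible G}
      ≤ 5 * n ^ 4 * (Real.exp (n ^ 2 * Real.exp (-p * (n - 6) / 6)) - 1) := by
  have hp1 : p ≤ 1 := by linarith
  have hn6 : (6 : ℝ) ≤ n := by exact_mod_cast hn
  refine (gnpProb_biUnion_le h0 hp1
    (Finset.univ.filter fun A : Finset (Fin n) => A.card ≤ 4) _
    (fun A => {G | ∃ g : Fin n → Fin n, (moved g).Nonempty ∧ Set.InjOn g {x | x ∉ A} ∧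
      (∀ x ∈ A, g x = x) ∧ ∀ x y, x ∉ A → y ∉ A → (G.Adj x y ↔ G.Adj (g x) (g y))}) ?_).trans ?_
  · intro G hG
    by_contra hcon
    refine hG (reconstructible_of_dense (by omega) fun φ A hA hφ x hx => ?_)
    by_contra hne
    -- replace `φ` by the identity on `A`, so that all moved points lie outside `A`
    refine hcon ⟨A, by simpa using hA, fun z => if z ∈ A then z else φ z, ⟨x, ?_⟩, ?_, ?_, ?_⟩
    · rw [mem_moved, if_neg hx]
      exact hne
    · intro a ha b hb hab
      simp only [Set.mem_ofPred_eq] at ha hb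
      simpa [ha, hb] using hab
    · intro a ha
      exact if_pos ha
    · intro a b ha hb
      simp only [if_neg ha, if_neg hb]
      exact hφ a b ha hb
  · have hA : ∀ A ∈ Finset.univ.filter (fun A : Finset (Fin n) => A.card ≤ 4),
        gnpProb n p {G | ∃ g : Fin n → Fin n, (moved g).Nonempty ∧ Set.InjOn g {x | x ∉ A} ∧
          (∀ x ∈ A, g x = x) ∧ ∀ x y, x ∉ A → y ∉ A → (G.Adj x y ↔ G.Adj (g x) (g y))}
        ≤ Real.exp (n ^ 2 * Real.exp (-p * (n - 6) / 6)) - 1 := by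
      intro A hA
      simp only [Finset.mem_filter, Finset.mem_univ, true_and] at hA
      let s : Finset (Fin n → Fin n) :=
        (Finset.univ.filter fun g : Fin n → Fin n => (moved g).Nonempty).filter fun g =>
          Set.InjOn g {x | x ∉ A} ∧ ∀ x ∈ A, g x = x
      refine (gnpProb_biUnion_le h0 hp1 s _ (fun g => {G | ∀ x y, x ∉ A → y ∉ A →
        (G.Adj x y ↔ G.Adj (g x) (g y))}) ?_).trans ?_
      · rintro G ⟨g, hg1, hg2, hg3, hg4⟩
        refine ⟨g, ?_, hg4⟩
        simp only [s, Finset.mem_filter, Finset.mem_univ, true_and]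
        exact ⟨hg1, hg2, hg3⟩
      refine le_trans ?_ (sum_moved_le n (Real.exp_pos _).le)
      refine le_trans ?_ (Finset.sum_le_sum_of_subset_of_nonneg (Finset.filter_subset _ _ : s ⊆ _)
        fun g _ _ => by positivity)
      refine Finset.sum_le_sum fun g hg => ?_
      simp only [s, Finset.mem_filter, Finset.mem_univ, true_and] at hg
      obtain ⟨-, hinj, hgA⟩ := hg
      obtain ⟨E', e1, e2, e3, e4, e5, e6⟩ := exists_pairs hA hinj hgA
      refine (gnpProb_mono h0 hp1 fun G hG => ?_).trans
        ((gnpProb_iff_le h0 h1 e1 e2 e3 e4).trans ?_)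
      · intro e he
        have := e5 e he
        induction e with | _ x y
        exact hG x y (this x (by simp)) (this y (by simp))
      · have e7 : ((moved g).card : ℝ) * (n - 6) ≤ 6 * E'.card := by
          have : (((moved g).card * (n - 6) : ℕ) : ℝ) ≤ ((6 * E'.card : ℕ) : ℝ) := by
            exact_mod_cast e6
          push_cast [Nat.cast_sub hn] at this
          exact this
        calc (1 - p) ^ E'.card ≤ Real.exp (-p) ^ E'.card := by
              have := Real.one_sub_le_exp_neg p
              have h2 : 0 ≤ 1 - p := by linarith
              gcongr
          _ = Real.exp (E'.card * -p) := (Real.exp_nat_mul _ _).symm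
          _ ≤ Real.exp ((moved g).card * (-p * (n - 6) / 6)) := by
              apply Real.exp_le_exp.2
              nlinarith
          _ = _ := Real.exp_nat_mul _ _
    refine (Finset.sum_le_sum hA).trans ?_
    rw [Finset.sum_const, nsmul_eq_mul]
    have hc : ((Finset.univ.filter fun A : Finset (Fin n) => A.card ≤ 4).card : ℝ) ≤ 5 * n ^ 4 := by
      exact_mod_cast card_small_sets_le (by omega)
    have : 0 ≤ Real.exp (n ^ 2 * Real.exp (-p * (n - 6) / 6)) - 1 := by
      have := Real.add_one_le_exp (n ^ 2 * Real.exp (-p * (n - 6) / 6))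
      have h2 : 0 ≤ n ^ 2 * Real.exp (-p * (n - 6) / 6) := by positivity
      linarith
    gcongr

/-! ### Asymptotics -/

/- In the three bounds below, `n` is written as `exp L` with `L = log n`, and `120 L ≤ exp (L / 20)`
turns `n p ≤ 120 L` into `p ≤ exp (-(19 / 20) L)`. -/

lemma sparse_bound {n : ℕ} {p : ℝ} (hn : 12 ≤ n) (h0 : 0 ≤ p) (h1 : p ≤ 1 / 2)
    (hL : 120 * Real.log n ≤ Real.exp (Real.log n / 20)) (hL1 : 1000 ≤ Real.log n)
    (hp : n * p ≤ 4 / 5 * Real.log n) :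
    gnpProb n p {G | ¬ Reconstructible G} ≤ 10 ^ 70 * Real.exp (-(Real.log n / 10)) := by
  have hn0 : (0 : ℝ) < n := by exact_mod_cast (by omega : 0 < n)
  refine (gnpProb_not_reconstructible_le_sparse (by omega) h0 h1).trans ?_
  set L := Real.log n with hLdef
  have hnL : (n : ℝ) = Real.exp L := (Real.exp_log hn0).symm
  have hp' : p ≤ Real.exp (-(19 / 20 * L)) := by
    have h2 : n * p ≤ Real.exp (L / 20) := by linarith
    have h3 : Real.exp (L / 20) = n * Real.exp (-(19 / 20 * L)) := by
      rw [hnL, ← Real.exp_add]; congr 1; ring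
    rw [h3] at h2
    exact le_of_mul_le_mul_left h2 hn0
  have hp12 : p ≤ 1 / 12 := by
    refine hp'.trans ?_
    rw [Real.exp_neg, ← one_div]
    apply one_div_le_one_div_of_le (by norm_num)
    have := Real.add_one_le_exp (19 / 20 * L)
    linarith
  have hp10 : p ≤ Real.exp (-(L / 10)) := hp'.trans (Real.exp_le_exp.2 (by linarith))
  -- `1 - p ≥ exp (-12 p / 11)`, and `12 / 11 * (4 / 5) ≤ 9 / 10`
  have hq : Real.exp (-(9 / 10 * L)) ≤ (1 - p) ^ (n - 1) := by
    have h2 : Real.exp (-(12 / 11 * p)) ≤ 1 - p := by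
      rw [Real.exp_neg]
      have := Real.add_one_le_exp (12 / 11 * p)
      refine (inv_anti₀ (by linarith) this).trans ?_
      rw [inv_le_iff_one_le_mul₀ (by linarith)]
      nlinarith
    calc Real.exp (-(9 / 10 * L)) ≤ Real.exp (n * -(12 / 11 * p)) :=
          Real.exp_le_exp.2 (by linarith)
      _ = Real.exp (-(12 / 11 * p)) ^ n := Real.exp_nat_mul _ _
      _ ≤ (1 - p) ^ n := by gcongr
      _ ≤ (1 - p) ^ (n - 1) := pow_le_pow_of_le_one (by linarith) (by linarith) (by omega)
  have hnq : 1 / (n * (1 - p) ^ (n - 1)) ≤ Real.exp (-(L / 10)) := by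
    have : Real.exp (L / 10) ≤ n * (1 - p) ^ (n - 1) := by
      calc Real.exp (L / 10) = n * Real.exp (-(9 / 10 * L)) := by
            rw [hnL, ← Real.exp_add]; congr 1; ring
        _ ≤ _ := by gcongr
    rw [Real.exp_neg, ← one_div]
    exact one_div_le_one_div_of_le (Real.exp_pos _) this
  have := Real.exp_pos (-(L / 10))
  linarith

lemma mid_bound {n : ℕ} {p : ℝ} (hn : 12 ≤ n) (h0 : 0 ≤ p) (h1 : p ≤ 1 / 2)
    (hL : 120 * Real.log n ≤ Real.exp (Real.log n / 20)) (hL1 : 1000 ≤ Real.log n)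
    (hp : 4 / 5 * Real.log n ≤ n * p) (hp2 : n * p ≤ 120 * Real.log n) :
    gnpProb n p {G | ¬ Reconstructible G} ≤ 10 ^ 70 * Real.exp (-(Real.log n / 10)) := by
  have hn0 : (0 : ℝ) < n := by exact_mod_cast (by omega : 0 < n)
  refine (gnpProb_not_reconstructible_le_mid (by omega) h0 (by linarith)).trans ?_
  set L := Real.log n with hLdef
  have hnL : (n : ℝ) = Real.exp L := (Real.exp_log hn0).symm
  have hp' : p ≤ Real.exp (-(19 / 20 * L)) := by
    have h2 : n * p ≤ Real.exp (L / 20) := by linarith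
    have h3 : Real.exp (L / 20) = n * Real.exp (-(19 / 20 * L)) := by
      rw [hnL, ← Real.exp_add]; congr 1; ring
    rw [h3] at h2
    exact le_of_mul_le_mul_left h2 hn0
  have hE := Real.exp_pos (-(L / 10))
  -- powers of `n` and `p` in terms of `L`
  have hpow : ∀ a b : ℕ, (n : ℝ) ^ a * p ^ b ≤ Real.exp (a * L + b * -(19 / 20 * L)) := by
    intro a b
    rw [Real.exp_add, Real.exp_nat_mul, Real.exp_nat_mul, ← hnL]
    gcongr
  have hexp : ∀ k : ℕ, (1 - 9 / 10 * p) ^ k ≤ Real.exp (k * -(9 / 10 * p)) := by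
    intro k
    rw [Real.exp_nat_mul]
    have h2 := Real.one_sub_le_exp_neg (9 / 10 * p)
    have h3 : 0 ≤ 1 - 9 / 10 * p := by linarith
    gcongr
  have he3 : Real.exp 3 ≤ 27 := by
    have h2 : Real.exp 3 = Real.exp 1 ^ 3 := by
      rw [← Real.exp_nat_mul]; norm_num
    rw [h2]
    have := Real.exp_one_lt_d9
    calc Real.exp 1 ^ 3 ≤ 3 ^ 3 := by gcongr; linarith
      _ = 27 := by norm_num
  have t1 : (n : ℝ) ^ 8 * p ^ 12 ≤ Real.exp (-(L / 10)) := by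
    refine (hpow 8 12).trans (Real.exp_le_exp.2 ?_)
    push_cast
    linarith
  have t2 : (n : ℝ) ^ 3 * (10 ^ 66 * (p ^ 2 * (1 - 9 / 10 * p) ^ (2 * (n - 3))))
      ≤ 10 ^ 66 * (27 * Real.exp (-(L / 10))) := by
    have h2 : (1 - 9 / 10 * p) ^ (2 * (n - 3)) ≤ Real.exp (-(36 / 25 * L) + 3) := by
      refine (hexp _).trans (Real.exp_le_exp.2 ?_)
      push_cast [Nat.cast_sub (by omega : 3 ≤ n)]
      nlinarith
    have h3 := hpow 3 2
    calc (n : ℝ) ^ 3 * (10 ^ 66 * (p ^ 2 * (1 - 9 / 10 * p) ^ (2 * (n - 3))))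
        = 10 ^ 66 * (((n : ℝ) ^ 3 * p ^ 2) * (1 - 9 / 10 * p) ^ (2 * (n - 3))) := by ring
      _ ≤ 10 ^ 66 * (Real.exp ((3 : ℕ) * L + (2 : ℕ) * -(19 / 20 * L))
          * Real.exp (-(36 / 25 * L) + 3)) := by
          have h4 : 0 ≤ (1 - 9 / 10 * p) ^ (2 * (n - 3)) := pow_nonneg (by linarith) _
          gcongr
      _ ≤ 10 ^ 66 * (Real.exp 3 * Real.exp (-(L / 10))) := by
          rw [← Real.exp_add, ← Real.exp_add]
          refine mul_le_mul_of_nonneg_left (Real.exp_le_exp.2 ?_) (by positivity)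
          push_cast
          linarith
      _ ≤ _ := by gcongr
  have t3 : 34 * (10 ^ 33 * (1 - 9 / 10 * p) ^ (n - 1))
      ≤ 34 * (10 ^ 33 * (27 * Real.exp (-(L / 10)))) := by
    have h2 : (1 - 9 / 10 * p) ^ (n - 1) ≤ Real.exp (3 + -(L / 10)) := by
      refine (hexp _).trans (Real.exp_le_exp.2 ?_)
      push_cast [Nat.cast_sub (by omega : 1 ≤ n)]
      nlinarith
    rw [Real.exp_add] at h2
    have h3 : Real.exp 3 * Real.exp (-(L / 10)) ≤ 27 * Real.exp (-(L / 10)) := by gcongr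
    have := h2.trans h3
    gcongr
  have t4 : Real.exp ((n : ℝ) ^ 2 * (n * p ^ 2) ^ 4) - 1 ≤ 2 * Real.exp (-(L / 10)) := by
    have e : (n : ℝ) ^ 2 * (n * p ^ 2) ^ 4 = (n : ℝ) ^ 6 * p ^ 8 := by ring
    rw [e]
    have h2 : (n : ℝ) ^ 6 * p ^ 8 ≤ Real.exp (-(L / 10)) := by
      refine (hpow 6 8).trans (Real.exp_le_exp.2 ?_)
      push_cast
      linarith
    have h3 : Real.exp (-(L / 10)) ≤ 1 := Real.exp_le_one_iff.2 (by linarith)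
    have h4 : 0 ≤ (n : ℝ) ^ 6 * p ^ 8 := by positivity
    have h5 := Real.abs_exp_sub_one_le (x := (n : ℝ) ^ 6 * p ^ 8) (by
      rw [abs_of_nonneg h4]; linarith)
    rw [abs_of_nonneg h4] at h5
    have := le_abs_self (Real.exp ((n : ℝ) ^ 6 * p ^ 8) - 1)
    linarith
  calc _ ≤ Real.exp (-(L / 10)) + 10 ^ 66 * (27 * Real.exp (-(L / 10)))
        + 34 * (10 ^ 33 * (27 * Real.exp (-(L / 10)))) + 2 * Real.exp (-(L / 10)) :=
        add_le_add (add_le_add (add_le_add t1 t2) t3) t4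
    _ = (1 + 10 ^ 66 * 27 + 34 * 10 ^ 33 * 27 + 2) * Real.exp (-(L / 10)) := by ring
    _ ≤ _ := by
      gcongr
      norm_num

lemma dense_bound {n : ℕ} {p : ℝ} (hn : 12 ≤ n) (h0 : 0 ≤ p) (h1 : p ≤ 1 / 2)
    (hL1 : 1000 ≤ Real.log n) (hp : 120 * Real.log n ≤ n * p) :
    gnpProb n p {G | ¬ Reconstructible G} ≤ 10 ^ 70 * Real.exp (-(Real.log n / 10)) := by
  have hn12 : (12 : ℝ) ≤ n := by exact_mod_cast hn
  have hn0 : (0 : ℝ) < n := by linarith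
  refine (gnpProb_not_reconstructible_le_dense (by omega) h0 h1).trans ?_
  set L := Real.log n with hLdef
  have hnL : (n : ℝ) = Real.exp L := (Real.exp_log hn0).symm
  have hz : (n : ℝ) ^ 2 * Real.exp (-p * (n - 6) / 6) ≤ Real.exp (-(8 * L)) := by
    have h2 : Real.exp (-p * (n - 6) / 6) ≤ Real.exp (-(10 * L)) := by
      apply Real.exp_le_exp.2
      nlinarith
    calc (n : ℝ) ^ 2 * Real.exp (-p * (n - 6) / 6) ≤ (n : ℝ) ^ 2 * Real.exp (-(10 * L)) := by gcongr
      _ = Real.exp (-(8 * L)) := by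
        rw [hnL, ← Real.exp_nat_mul, ← Real.exp_add]
        congr 1
        push_cast
        ring
  set z := (n : ℝ) ^ 2 * Real.exp (-p * (n - 6) / 6) with hzdef
  have h3 : Real.exp (-(8 * L)) ≤ 1 := Real.exp_le_one_iff.2 (by linarith)
  have h4 : 0 ≤ z := by positivity
  have h5 := Real.abs_exp_sub_one_le (x := z) (by rw [abs_of_nonneg h4]; linarith)
  rw [abs_of_nonneg h4] at h5
  have h6 : Real.exp z - 1 ≤ 2 * Real.exp (-(8 * L)) := by
    have := le_abs_self (Real.exp z - 1)
    linarith
  calc 5 * (n : ℝ) ^ 4 * (Real.exp z - 1) ≤ 5 * (n : ℝ) ^ 4 * (2 * Real.exp (-(8 * L))) := by gcongr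
    _ = 10 * Real.exp (-(4 * L)) := by
      have : (n : ℝ) ^ 4 * Real.exp (-(8 * L)) = Real.exp (-(4 * L)) := by
        rw [hnL, ← Real.exp_nat_mul, ← Real.exp_add]
        congr 1
        push_cast
        ring
      rw [← this]
      ring
    _ ≤ 10 ^ 70 * Real.exp (-(L / 10)) := by
      gcongr
      · norm_num
      · linarith

/-- A bound for the probability of not being reconstructible that is uniform in `p`; passing to
complements reduces it to `p ≤ 1 / 2`. -/
lemma eventually_bound : ∀ᶠ n : ℕ in Filter.atTop, ∀ p : ℝ, 0 ≤ p → p ≤ 1 →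
    gnpProb n p {G | ¬ Reconstructible G} ≤ 10 ^ 70 * Real.exp (-(Real.log n / 10)) := by
  have hlog : Filter.Tendsto (fun n : ℕ => Real.log n) Filter.atTop Filter.atTop :=
    Real.tendsto_log_atTop.comp tendsto_natCast_atTop_atTop
  have h1 : ∀ᶠ L : ℝ in Filter.atTop, 120 * L ≤ Real.exp (L / 20) := by
    filter_upwards [Filter.eventually_ge_atTop (120 * 800)] with L hL
    have := Real.quadratic_le_exp_of_nonneg (x := L / 20) (by linarith)
    nlinarith
  filter_upwards [hlog.eventually h1, hlog.eventually_ge_atTop 1000, Filter.eventually_ge_atTop 12]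
    with n hL hL1 hn
  have half : ∀ p : ℝ, 0 ≤ p → p ≤ 1 / 2 →
      gnpProb n p {G | ¬ Reconstructible G} ≤ 10 ^ 70 * Real.exp (-(Real.log n / 10)) := by
    intro p h0 h1
    rcases le_total (n * p) (4 / 5 * Real.log n) with h | h
    · exact sparse_bound hn h0 h1 hL hL1 h
    · rcases le_total (n * p) (120 * Real.log n) with h' | h'
      · exact mid_bound hn h0 h1 hL hL1 h h'
      · exact dense_bound hn h0 h1 hL1 h'
  intro p h0 h1
  rcases le_total p (1 / 2) with h | h
  · exact half p h0 h
  · rw [← gnpProb_not_reconstructible_compl]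
    exact half (1 - p) (by linarith) (by linarith)

/-- For every sequence `p(n) ∈ [0,1]`, a random `G(n,p)` graph is whp reconstructible. -/
theorem gnp_reconstructible_whp (p : ℕ → ℝ) (hp0 : ∀ n, 0 ≤ p n) (hp1 : ∀ n, p n ≤ 1) :
    Filter.Tendsto
      (fun n : ℕ => gnpProb n (p n) {G : SimpleGraph (Fin n) | Reconstructible G})
      Filter.atTop (nhds 1) := by
  have hsum : ∀ n, gnpProb n (p n) {G : SimpleGraph (Fin n) | Reconstructible G}
      + gnpProb n (p n) {G | ¬ Reconstructible G} = 1 := fun n => gnpProb_add_compl _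
  have hlim : Filter.Tendsto
      (fun n : ℕ => 1 - 10 ^ 70 * Real.exp (-(Real.log n / 10))) Filter.atTop (nhds 1) := by
    have hlog : Filter.Tendsto (fun n : ℕ => Real.log n / 10) Filter.atTop Filter.atTop :=
      (Real.tendsto_log_atTop.comp tendsto_natCast_atTop_atTop).atTop_div_const (by norm_num)
    have := ((Real.tendsto_exp_neg_atTop_nhds_zero.comp hlog).const_mul (10 ^ 70)).const_sub 1
    simpa using this
  refine tendsto_of_tendsto_of_tendsto_of_le_of_le' hlim tendsto_const_nhds ?_ ?_
  · filter_upwards [eventually_bound] with n hn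
    have h1 := hn (p n) (hp0 n) (hp1 n)
    have h2 := hsum n
    linarith
  · filter_upwards with n
    have h1 := gnpProb_nonneg (hp0 n) (hp1 n) {G : SimpleGraph (Fin n) | ¬ Reconstructible G}
    have h2 := hsum n
    linarith
end

section
/- Let X be a multinomial random variable with parameters (m, (p₁,...,p_k)), and suppose that the probability Pr(X = (a₁,...,a_k)) is maximal among all outcomes, i.e., Pr(X = (a₁,...,a_k)) = Π(X). Then a_t > m·p_t − 1 for every index t; in other words, a_t ≥ ⌊m·p_t⌋ for every t. -/
/-!
Write `Pr(X = a) = m! · w(a)` with `w(a) = ∏ pᵢ^{aᵢ} / aᵢ!`. Moving one unit of mass from a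
coordinate `s` with `a s > 0` to another coordinate `t` multiplies the probability by
`a s · p t / (p s · (a t + 1))`, so maximality forces `a s · p t ≤ p s · (a t + 1)`
(`maximizer_exchange`; the maximal probability is positive, so one may cancel). Summing over
`s ≠ t` gives `(m - a t) p t ≤ (1 - p t)(a t + 1)`, i.e. `m · p t - 1 ≤ a t - p t`. This is the
claim when `p t > 0`, and the claim is trivial when `p t = 0`.
-/

/-- The point probability `Pr(X = a)` of a multinomial random variable with
parameters `(m, p)` where `m = ∑ i, a i`: the multinomial coefficient times `∏ pᵢ^{aᵢ}`. -/
noncomputable def multinomialProb {k : ℕ} (p : Fin k → ℝ) (a : Fin k → ℕ) : ℝ :=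
  (Nat.multinomial Finset.univ a : ℝ) * ∏ i, p i ^ a i

/-- The multinomial point probability without the common factor `m!`. -/
noncomputable def multinomialWeight {k : ℕ} (p : Fin k → ℝ) (a : Fin k → ℕ) : ℝ :=
  ∏ i, p i ^ a i / (a i).factorial

lemma multinomialProb_eq {k : ℕ} (p : Fin k → ℝ) (a : Fin k → ℕ) :
    multinomialProb p a = ((∑ i, a i).factorial : ℝ) * multinomialWeight p a := by
  have h : (∏ i, ((a i).factorial : ℝ)) * (Nat.multinomial Finset.univ a : ℝ)
      = ((∑ i, a i).factorial : ℝ) := by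
    exact_mod_cast Nat.multinomial_spec Finset.univ a
  have h0 : (∏ i, ((a i).factorial : ℝ)) ≠ 0 :=
    Finset.prod_ne_zero_iff.mpr fun i _ => by positivity
  rw [multinomialProb, multinomialWeight, Finset.prod_div_distrib, ← h]
  field_simp

lemma multinomialWeight_update {k : ℕ} (p : Fin k → ℝ) (c : Fin k → ℕ) (s : Fin k) :
    multinomialWeight p (Function.update c s (c s + 1))
      = multinomialWeight p c * (p s / (c s + 1)) := by
  unfold multinomialWeight
  rw [← Finset.mul_prod_erase Finset.univ _ (Finset.mem_univ s),
    ← Finset.mul_prod_erase Finset.univ (fun i => p i ^ c i / ((c i).factorial : ℝ))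
      (Finset.mem_univ s)]
  have h : ∏ i ∈ Finset.univ.erase s, p i ^ (Function.update c s (c s + 1) i) /
        ((Function.update c s (c s + 1) i).factorial : ℝ)
      = ∏ i ∈ Finset.univ.erase s, p i ^ c i / ((c i).factorial : ℝ) := by
    refine Finset.prod_congr rfl fun i hi => ?_
    rw [Function.update_of_ne (Finset.ne_of_mem_erase hi)]
  rw [h, Function.update_self, Nat.factorial_succ, pow_succ]
  push_cast
  have : ((c s).factorial : ℝ) ≠ 0 := by positivity
  field_simp

lemma sum_update_succ {k : ℕ} (c : Fin k → ℕ) (s : Fin k) :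
    ∑ i, Function.update c s (c s + 1) i = ∑ i, c i + 1 := by
  rw [Finset.sum_update_of_mem (Finset.mem_univ s), Finset.sdiff_singleton_eq_erase,
    ← Finset.add_sum_erase Finset.univ c (Finset.mem_univ s)]
  ring

lemma multinomialWeight_nonneg {k : ℕ} {p : Fin k → ℝ} (hp0 : ∀ i, 0 ≤ p i)
    (a : Fin k → ℕ) : 0 ≤ multinomialWeight p a :=
  Finset.prod_nonneg fun i _ => div_nonneg (pow_nonneg (hp0 i) _) (by positivity)

/-- Some outcome has positive probability: put all the mass on a coordinate `j` with `p j > 0`. -/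
lemma exists_multinomialWeight_pos {k : ℕ} (m : ℕ) {p : Fin k → ℝ} (hp0 : ∀ i, 0 ≤ p i)
    (hp1 : ∑ i, p i = 1) : ∃ b : Fin k → ℕ, ∑ i, b i = m ∧ 0 < multinomialWeight p b := by
  obtain ⟨j, -, hj⟩ := Finset.exists_ne_zero_of_sum_ne_zero (hp1.trans_ne one_ne_zero)
  have hj' : 0 < p j := lt_of_le_of_ne (hp0 j) (Ne.symm hj)
  refine ⟨Pi.single j m, by simp, Finset.prod_pos fun i _ => ?_⟩
  by_cases h : i = j
  · subst h
    rw [Pi.single_eq_same]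
    positivity
  · rw [Pi.single_eq_of_ne h]
    simp

/-- Exchange inequality: moving one unit from `s` to `t` does not increase the probability of a
maximizer. -/
lemma maximizer_exchange {k m : ℕ} {p : Fin k → ℝ} (hp0 : ∀ i, 0 ≤ p i) {a : Fin k → ℕ}
    (ha : ∑ i, a i = m) (hpos : 0 < multinomialWeight p a)
    (hmax : ∀ b : Fin k → ℕ, ∑ i, b i = m → multinomialWeight p b ≤ multinomialWeight p a)
    {s t : Fin k} (hst : t ≠ s) : (a s : ℝ) * p t ≤ p s * (a t + 1) := by
  rcases Nat.eq_zero_or_pos (a s) with h0 | hs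
  · rw [h0, Nat.cast_zero, zero_mul]
    exact mul_nonneg (hp0 s) (by positivity)
  -- `c` is the common part of `a` and of its competitor, which adds the unit at `t` instead.
  obtain ⟨c, hc⟩ : ∃ c, c = Function.update a s (a s - 1) := ⟨_, rfl⟩
  have hcs : c s + 1 = a s := by
    rw [hc, Function.update_self]
    omega
  have hct : c t = a t := by rw [hc, Function.update_of_ne hst]
  have hac : Function.update c s (c s + 1) = a := by
    rw [hcs, hc, Function.update_idem, Function.update_eq_self]
  have hsum : ∑ i, Function.update c t (c t + 1) i = m := by
    rw [sum_update_succ, ← sum_update_succ c s, hac, ha]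
  have hle := hmax _ hsum
  have hwa := multinomialWeight_update p c s
  rw [hac] at hwa
  have hcs' : (c s : ℝ) + 1 = a s := by exact_mod_cast hcs
  rw [hcs'] at hwa
  rw [multinomialWeight_update, hct, hwa] at hle
  have hcpos : 0 < multinomialWeight p c := by
    refine lt_of_le_of_ne (multinomialWeight_nonneg hp0 c) fun h => ?_
    rw [hwa, ← h, zero_mul] at hpos
    exact lt_irrefl _ hpos
  have h := le_of_mul_le_mul_left hle hcpos
  have hs' : (0 : ℝ) < a s := by exact_mod_cast hs
  rw [div_le_div_iff₀ (by positivity) hs'] at h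
  linarith

/-- If `Pr(X = a)` is maximal among all outcomes of a multinomial random variable `X` with
parameters `(m, (p₁,…,p_k))`, then `a t > m·p t − 1` for every index `t`. -/
theorem multinomial_maximizer (k m : ℕ) (p : Fin k → ℝ)
    (hp0 : ∀ i, 0 ≤ p i) (hp1 : ∑ i, p i = 1)
    (a : Fin k → ℕ) (ha : ∑ i, a i = m)
    (hmax : ∀ b : Fin k → ℕ, ∑ i, b i = m → multinomialProb p b ≤ multinomialProb p a) :
    ∀ t : Fin k, (m : ℝ) * p t - 1 < a t := by
  intro t
  have hw : ∀ b : Fin k → ℕ, ∑ i, b i = m → multinomialWeight p b ≤ multinomialWeight p a := by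
    intro b hb
    have h := hmax b hb
    rw [multinomialProb_eq, multinomialProb_eq, hb, ha] at h
    exact le_of_mul_le_mul_left h (by positivity)
  have hpos : 0 < multinomialWeight p a := by
    obtain ⟨b, hb, hb0⟩ := exists_multinomialWeight_pos m hp0 hp1
    exact hb0.trans_le (hw b hb)
  have hS : ∑ s ∈ Finset.univ.erase t, (a s : ℝ) * p t
      ≤ ∑ s ∈ Finset.univ.erase t, p s * ((a t : ℝ) + 1) :=
    Finset.sum_le_sum fun s hs =>
      maximizer_exchange hp0 ha hpos hw (Finset.ne_of_mem_erase hs).symm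
  rw [← Finset.sum_mul, ← Finset.sum_mul] at hS
  have hA : (a t : ℝ) + ∑ s ∈ Finset.univ.erase t, (a s : ℝ) = m := by
    rw [Finset.add_sum_erase Finset.univ (fun s => (a s : ℝ)) (Finset.mem_univ t)]
    exact_mod_cast ha
  have hP : p t + ∑ s ∈ Finset.univ.erase t, p s = 1 := by
    rw [Finset.add_sum_erase Finset.univ p (Finset.mem_univ t), hp1]
  rw [eq_sub_of_add_eq' hA, eq_sub_of_add_eq' hP] at hS
  rcases (hp0 t).eq_or_lt with h | h
  · rw [← h, mul_zero]
    have : (0 : ℝ) ≤ a t := by positivity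
    linarith
  · linarith
end

section
/- For every constant c > 0 there exist α > 0 and m₀ such that the following holds. For every integer m ≥ m₀ and every probability vector (p₁,...,p_k) with p_i ≤ c/√m for each i, the maximal point probability of the multinomial distribution with parameters (m,(p₁,...,p_k)) satisfies Π(m,(p₁,...,p_k)) ≤ m^{−α·√m/c}. -/
/-- For fixed `l`, the map `a ↦ l ^ a / a !` is largest at any `n` with `n ≤ l ≤ n + 1`. -/
lemma pow_div_factorial_le_floor (l : ℝ) (n a : ℕ) (hn : (n : ℝ) ≤ l) (hn' : l ≤ n + 1) :
    l ^ a / (a.factorial : ℝ) ≤ l ^ n / (n.factorial : ℝ) := by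
  have hl : 0 ≤ l := le_trans (Nat.cast_nonneg n) hn
  rcases le_total a n with h | h
  · obtain ⟨d, rfl⟩ := Nat.exists_eq_add_of_le h
    clear h hn'
    induction d with
    | zero => simp
    | succ d ih =>
      push_cast at hn
      refine (ih (by push_cast; linarith)).trans ?_
      rw [← add_assoc, Nat.factorial_succ, div_le_div_iff₀ (by positivity) (by positivity), pow_succ]
      push_cast
      have : (0:ℝ) ≤ l ^ (a + d) * ((a + d).factorial : ℝ) := by positivity
      nlinarith
  · obtain ⟨d, rfl⟩ := Nat.exists_eq_add_of_le h
    have h1 : (n.factorial : ℝ) * (n + 1) ^ d ≤ ((n + d).factorial : ℝ) := by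
      exact_mod_cast Nat.factorial_mul_pow_le_factorial
    rw [div_le_div_iff₀ (by positivity) (by positivity), pow_add]
    have h2 : l ^ d ≤ (n + 1 : ℝ) ^ d := by gcongr
    calc l ^ n * l ^ d * n.factorial = l ^ n * (n.factorial * l ^ d) := by ring
      _ ≤ l ^ n * (n.factorial * (n + 1) ^ d) := by gcongr
      _ ≤ _ := by gcongr

/-- For fixed `n`, the map `l ↦ l ^ n * exp (-l)` is largest at `l = n`. -/
lemma pow_mul_exp_neg_le (l : ℝ) (n : ℕ) (hn : n ≠ 0) (hl : 0 ≤ l) :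
    l ^ n * Real.exp (-l) ≤ (n / Real.exp 1 : ℝ) ^ n := by
  have hn0 : (0:ℝ) < n := by positivity
  have h1 : l / n ≤ Real.exp (l / n - 1) := by
    linarith [Real.add_one_le_exp (l / n - 1)]
  have h2 : (l / n) ^ n ≤ Real.exp (l / n - 1) ^ n := by gcongr
  rw [← Real.exp_nat_mul, div_pow, div_le_iff₀ (by positivity)] at h2
  have h3 : (n : ℝ) * (l / n - 1) = l - n := by field_simp
  rw [h3] at h2
  calc l ^ n * Real.exp (-l) ≤ (Real.exp (l - n) * n ^ n) * Real.exp (-l) := by gcongr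
    _ = (n / Real.exp 1 : ℝ) ^ n := by
      rw [div_pow, ← Real.exp_nat_mul, mul_one, Real.exp_sub, Real.exp_neg]
      field_simp

/-- Every point weight of the Poisson distribution of mean `l` is at most `(1 + l) ^ (-1/4)`. -/
lemma poisson_weight_le (l : ℝ) (a : ℕ) (hl : 0 ≤ l) :
    Real.exp (-l) * l ^ a / (a.factorial : ℝ) ≤ (1 + l) ^ (-(1 / 4) : ℝ) := by
  obtain ⟨n, hn⟩ : ∃ n, n = ⌊l⌋₊ := ⟨_, rfl⟩
  have hn1 : (n : ℝ) ≤ l := hn ▸ Nat.floor_le hl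
  have hn2 : l ≤ n + 1 := hn ▸ (Nat.lt_floor_add_one l).le
  have hmode := pow_div_factorial_le_floor l n a hn1 hn2
  have h1 : Real.exp (-l) * l ^ a / (a.factorial : ℝ) ≤
      Real.exp (-l) * (l ^ n / (n.factorial : ℝ)) := by
    rw [mul_div_assoc]; gcongr
  refine h1.trans ?_
  rcases Nat.eq_zero_or_pos n with h0 | h0
  · subst h0
    simp only [pow_zero, Nat.factorial_zero, Nat.cast_one, div_one, mul_one]
    rw [Real.exp_neg]
    calc (Real.exp l)⁻¹ ≤ (1 + l)⁻¹ := by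
          have := Real.add_one_le_exp l
          gcongr; linarith
      _ = (1 + l) ^ (-1 : ℝ) := (Real.rpow_neg_one _).symm
      _ ≤ _ := Real.rpow_le_rpow_of_exponent_le (by linarith) (by norm_num)
  · have hn0 : (1:ℝ) ≤ n := by exact_mod_cast h0
    have hst := Stirling.le_factorial_stirling n
    have hp := pow_mul_exp_neg_le l n h0.ne' hl
    have hq : 0 < (n / Real.exp 1 : ℝ) ^ n := by positivity
    have hs : (0:ℝ) < √(2 * Real.pi * n) := by positivity
    have h2 : Real.exp (-l) * (l ^ n / (n.factorial : ℝ)) ≤ (√(2 * Real.pi * n))⁻¹ := by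
      calc Real.exp (-l) * (l ^ n / (n.factorial : ℝ))
          = (l ^ n * Real.exp (-l)) / n.factorial := by ring
        _ ≤ (n / Real.exp 1 : ℝ) ^ n / (√(2 * Real.pi * n) * (n / Real.exp 1 : ℝ) ^ n) := by
          gcongr
        _ = _ := by field_simp
    refine h2.trans ?_
    rw [Real.rpow_neg (by linarith), Real.sqrt_eq_rpow]
    gcongr
    calc (1 + l) ^ (1 / 4 : ℝ) ≤ (1 + l) ^ (1 / 2 : ℝ) :=
          Real.rpow_le_rpow_of_exponent_le (by linarith) (by norm_num)
      _ ≤ _ := by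
        gcongr
        nlinarith [Real.pi_gt_three]

/-- The inverse of the Poisson weight of mean `m` at `m`; the sequence `stirlingSeq` decreases from
its value `e / √2` at `1`. -/
lemma factorial_mul_exp_le (m : ℕ) (hm : 1 ≤ m) :
    (m.factorial : ℝ) * Real.exp m / (m : ℝ) ^ m ≤ Real.exp 1 * √m := by
  obtain ⟨n, rfl⟩ := Nat.exists_eq_add_of_le' hm
  have h := Stirling.stirlingSeq'_antitone (Nat.zero_le n)
  simp only [Function.comp, Nat.succ_eq_add_one, zero_add] at h
  rw [Stirling.stirlingSeq_one, Stirling.stirlingSeq] at h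
  have hs : (0:ℝ) < √((n + 1 : ℕ) : ℝ) := by positivity
  have h2 : (0:ℝ) < √2 := by positivity
  rw [Real.sqrt_mul (by norm_num), div_le_div_iff₀ (by positivity) h2, div_pow,
    ← Real.exp_nat_mul, mul_one] at h
  rw [div_le_iff₀ (by positivity)]
  have he := Real.exp_pos ((n + 1 : ℕ) : ℝ)
  field_simp at h
  linarith

/-- The multinomial weight as a product of Poisson weights, divided by the Poisson weight
`exp (-m) * m ^ m / m !` of the sum. -/
lemma multinomialProb_eq_poisson {k : ℕ} (p : Fin k → ℝ) (a : Fin k → ℕ) (m : ℕ) (hm : 1 ≤ m)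
    (hp : ∑ i, p i = 1) (ha : ∑ i, a i = m) :
    multinomialProb p a = ((m.factorial : ℝ) * Real.exp m / (m : ℝ) ^ m) *
      ∏ i, (Real.exp (-(m * p i)) * (m * p i) ^ a i / ((a i).factorial : ℝ)) := by
  have h1 : (∏ i, ((a i).factorial : ℝ)) * (Nat.multinomial Finset.univ a : ℝ)
      = (m.factorial : ℝ) := by
    rw [← ha]
    exact_mod_cast Nat.multinomial_spec Finset.univ a
  have hf : (∏ i, ((a i).factorial : ℝ)) ≠ 0 :=
    Finset.prod_ne_zero_iff.mpr fun i _ => by positivity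
  have hm0 : (m : ℝ) ≠ 0 := by positivity
  rw [multinomialProb, Finset.prod_div_distrib, Finset.prod_mul_distrib, ← Real.exp_sum,
    Finset.sum_neg_distrib, ← Finset.mul_sum, hp, mul_one]
  simp only [mul_pow]
  rw [Finset.prod_mul_distrib, Finset.prod_pow_eq_pow_sum, ha, ← h1, Real.exp_neg]
  field_simp

/-- The Bernoulli bound absorbs the factor `e * √m` for large `m`; in the proof `t = √m / c`, and
`log (1 + c * √m) ≥ log m / 4` holds once `log m ≥ -4 * log c`. -/
lemma eventually_final_bound (c : ℝ) (hc : 0 < c) :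
    ∀ᶠ m : ℕ in Filter.atTop, Real.exp 1 * √m * (1 + c * √m) ^ (-(√m / (4 * c)))
      ≤ (m : ℝ) ^ (-(1 / 32 * √m / c)) := by
  have hlog : Filter.Tendsto (fun m : ℕ => Real.log m) Filter.atTop Filter.atTop :=
    Real.tendsto_log_atTop.comp tendsto_natCast_atTop_atTop
  have hsqrt : Filter.Tendsto (fun m : ℕ => √(m : ℝ)) Filter.atTop Filter.atTop :=
    Real.tendsto_sqrt_atTop.comp tendsto_natCast_atTop_atTop
  filter_upwards [hlog.eventually_ge_atTop 1, hlog.eventually_ge_atTop (-4 * Real.log c),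
    hsqrt.eventually_ge_atTop (64 * c), Filter.eventually_ge_atTop 1] with m hL hLc hS hm
  have hm0 : (0:ℝ) < m := by exact_mod_cast hm
  have hs : 0 < √(m : ℝ) := by positivity
  have hM : 1 / 4 * Real.log m ≤ Real.log (1 + c * √m) := by
    have h1 : Real.log (c * √m) ≤ Real.log (1 + c * √m) :=
      Real.log_le_log (by positivity) (by linarith)
    rw [Real.log_mul hc.ne' hs.ne', Real.log_sqrt hm0.le] at h1
    linarith
  rw [← Real.log_le_log_iff (by positivity) (by positivity), Real.log_mul (by positivity)
    (by positivity), Real.log_mul (by positivity) (by positivity), Real.log_exp,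
    Real.log_sqrt hm0.le, Real.log_rpow (by positivity), Real.log_rpow hm0]
  obtain ⟨t, ht⟩ : ∃ t, t = √(m : ℝ) / c := ⟨_, rfl⟩
  have ht64 : 64 ≤ t := by rw [ht, le_div_iff₀ hc]; exact hS
  have e1 : √(m : ℝ) / (4 * c) = t / 4 := by rw [ht]; field_simp
  have e2 : 1 / 32 * √(m : ℝ) / c = t / 32 := by rw [ht]; ring
  rw [e1, e2]
  have h1 : t / 4 * (1 / 4 * Real.log m) ≤ t / 4 * Real.log (1 + c * √m) := by gcongr
  have h2 : 64 * Real.log m ≤ t * Real.log m := by gcongr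
  linarith

/-- For every `c > 0` there are `α > 0` and `m₀` such that for all `m ≥ m₀` and every
probability vector with all entries at most `c/√m`, every point probability of the
corresponding multinomial distribution (hence also the maximal one, `Π`) is at most
`m^{-α·√m/c}`. -/
theorem multinomial_flat_bound (c : ℝ) (hc : 0 < c) :
    ∃ α : ℝ, 0 < α ∧ ∃ m₀ : ℕ, ∀ m : ℕ, m₀ ≤ m →
      ∀ k : ℕ, ∀ p : Fin k → ℝ, (∀ i, 0 ≤ p i) → (∑ i, p i = 1) →
        (∀ i, p i ≤ c / Real.sqrt m) →
        ∀ a : Fin k → ℕ, ∑ i, a i = m →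
          multinomialProb p a ≤ (m : ℝ) ^ (-(α * Real.sqrt m / c)) := by
  obtain ⟨m₁, hm₁⟩ := Filter.eventually_atTop.mp (eventually_final_bound c hc)
  refine ⟨1 / 32, by norm_num, max m₁ 1, fun m hm k p hp0 hp1 hpc a ha => ?_⟩
  have hm1 : 1 ≤ m := (le_max_right _ _).trans hm
  have hm0 : (0:ℝ) < m := by exact_mod_cast hm1
  have hs : 0 < √(m : ℝ) := by positivity
  have hss : √(m : ℝ) * √(m : ℝ) = m := Real.mul_self_sqrt hm0.le
  refine le_trans ?_ (hm₁ m ((le_max_left _ _).trans hm))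
  rw [multinomialProb_eq_poisson p a m hm1 hp1 ha]
  have hfac : ∀ i, Real.exp (-(m * p i)) * (m * p i) ^ a i / ((a i).factorial : ℝ) ≤
      (1 + c * √m) ^ (-(√m / (4 * c)) * p i) := by
    intro i
    have hl : 0 ≤ m * p i := mul_nonneg hm0.le (hp0 i)
    refine (poisson_weight_le _ (a i) hl).trans ?_
    -- Bernoulli's inequality with `s = c * √m` and exponent `√m * p i / c = m * p i / s ≤ 1`.
    have hB := rpow_one_add_le_one_add_mul_self (s := c * √m) (p := √m * p i / c)
      (by linarith [mul_pos hc hs]) (div_nonneg (mul_nonneg hs.le (hp0 i)) hc.le)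
      (by
        rw [div_le_one hc]
        have := hpc i
        rw [le_div_iff₀ hs] at this
        linarith)
    have e : √(m : ℝ) * p i / c * (c * √m) = m * p i := by
      rw [show √(m : ℝ) * p i / c * (c * √m) = √m * √m * p i by field_simp, hss]
    rw [e] at hB
    have e2 : -(√(m : ℝ) / (4 * c)) * p i = √m * p i / c * (-(1 / 4)) := by
      field_simp
    rw [e2, Real.rpow_mul (by positivity)]
    exact Real.rpow_le_rpow_of_nonpos (by positivity) hB (by norm_num)
  have hprod : ∏ i, (Real.exp (-(m * p i)) * (m * p i) ^ a i / ((a i).factorial : ℝ)) ≤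
      (1 + c * √m) ^ (-(√m / (4 * c))) := by
    calc _ ≤ ∏ i, (1 + c * √m) ^ (-(√m / (4 * c)) * p i) := by
          refine Finset.prod_le_prod (fun i _ => ?_) fun i _ => hfac i
          have := hp0 i
          positivity
      _ = _ := by
          rw [← Real.rpow_sum_of_pos (by positivity), ← Finset.mul_sum, hp1, mul_one]
  have hprod0 : 0 ≤ ∏ i, (Real.exp (-(m * p i)) * (m * p i) ^ a i / ((a i).factorial : ℝ)) :=
    Finset.prod_nonneg fun i _ => by
      have := hp0 i
      positivity
  exact mul_le_mul (factorial_mul_exp_le m hm1) hprod hprod0 (by positivity)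
end

section
/- Let G = (V,E) be a finite graph with 2-core vertex set R(G), and let S ⊆ V be the set of vertices of G of degree at most 3. Then |S| ≥ |V ∖ R(G)| / 4. -/
/-!
Write `W` for the complement of the 2-core. Vertices of `W` can be peeled off one at a time, each
having at most one neighbour among the vertices still present, so at most `|W|` edges meet `W`
and the degrees of the vertices of `W` sum to at most `2|W|` (`sum_card_adj_sdiff_twoCore_le`).
Every vertex of `W` outside the set `S` of vertices of degree at most 3 contributes at least 4,
whence `4(|W| - |S|) ≤ 2|W|`. This gives `|S| ≥ |W| / 2`, stronger than the claimed bound.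
-/

/-- The vertex set of the 2-core of `G`: the largest set of vertices inducing a
subgraph of minimum degree at least 2 (the union of all such sets). -/
def twoCore {V : Type*} (G : SimpleGraph V) : Set V :=
  ⋃₀ {S : Set V | ∀ v ∈ S, 2 ≤ ({u ∈ S | G.Adj v u} : Set V).ncard}

open Classical in
/-- The degree bound for peeling: whenever the vertices `B` still present contain the 2-core `C`,
the degrees within `B` of the vertices of `B \ C` sum to at most `2|B \ C|`. -/
lemma sum_card_adj_sdiff_twoCore_le {V : Type*} (G : SimpleGraph V) (C : Finset V)
    (hC : (C : Set V) = twoCore G) (B : Finset V) (hCB : C ⊆ B) :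
    ∑ u ∈ B \ C, (B.filter (fun w => G.Adj u w)).card ≤ 2 * (B \ C).card := by
  induction B using Finset.strongInduction with
  | H B ih =>
  have hcount : ∀ v, ({u ∈ (B : Set V) | G.Adj v u} : Set V).ncard
      = (B.filter (fun w => G.Adj v w)).card := by
    intro v
    rw [← Set.ncard_coe_finset]
    simp
  by_cases h : ∀ v ∈ B, 2 ≤ (B.filter (fun w => G.Adj v w)).card
  · have hBC : B ⊆ C := by
      rw [← Finset.coe_subset, hC]
      apply Set.subset_sUnion_of_mem
      intro v hv
      rw [hcount]
      exact h v hv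
    simp [Finset.sdiff_eq_empty_iff_subset.2 hBC]
  · push Not at h
    obtain ⟨v, hvB, hv⟩ := h
    -- A core vertex keeps two neighbours inside the core, hence inside `B`.
    have hvC : v ∉ C := by
      intro hvC
      rw [← Finset.mem_coe, hC] at hvC
      obtain ⟨S, hS, hvS⟩ := hvC
      have hSB : S ⊆ (B : Set V) := by
        refine (Set.subset_sUnion_of_mem hS).trans ?_
        change twoCore G ⊆ _
        rw [← hC]
        exact Finset.coe_subset.2 hCB
      have hle : ({u ∈ S | G.Adj v u} : Set V).ncard
          ≤ ({u ∈ (B : Set V) | G.Adj v u} : Set V).ncard :=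
        Set.ncard_le_ncard (fun u hu => ⟨hSB hu.1, hu.2⟩)
          (B.finite_toSet.subset (fun u hu => hu.1))
      have h2 := hS v hvS
      rw [hcount] at hle
      omega
    have hrec := ih (B.erase v) (Finset.erase_ssubset hvB)
      (Finset.subset_erase.2 ⟨hCB, hvC⟩)
    have hsplit : B \ C = insert v (B.erase v \ C) := by
      ext x
      by_cases hx : x = v <;> simp_all
    have hnot : v ∉ B.erase v \ C := by simp
    have hdeg : ∀ u, (B.filter (fun w => G.Adj u w)).card
        ≤ ((B.erase v).filter (fun w => G.Adj u w)).card + if G.Adj v u then 1 else 0 := by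
      intro u
      rw [Finset.filter_erase]
      split_ifs with hvu
      · have := Finset.pred_card_le_card_erase (s := B.filter (fun w => G.Adj u w)) (a := v)
        omega
      · rw [Finset.erase_eq_of_notMem (by simp [G.adj_comm u v, hvu])]
        simp
    have hsum := Finset.sum_le_sum (fun u (_ : u ∈ B.erase v \ C) => hdeg u)
    rw [Finset.sum_add_distrib, ← Finset.card_filter] at hsum
    have hlost : ((B.erase v \ C).filter (fun u => G.Adj v u)).card
        ≤ (B.filter (fun u => G.Adj v u)).card :=
      Finset.card_le_card (Finset.filter_subset_filter _
        (Finset.sdiff_subset.trans (Finset.erase_subset _ _)))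
    rw [hsplit, Finset.sum_insert hnot, Finset.card_insert_of_notMem hnot]
    omega

/-- In any finite graph, the set `S` of vertices of degree at most 3 satisfies
`|S| ≥ |V ∖ R(G)| / 4`, where `R(G)` is the vertex set of the 2-core. -/
theorem low_degree_vertices_ge_quarter_outside_twoCore
    {V : Type*} [Fintype V] (G : SimpleGraph V) :
    ((((twoCore G)ᶜ : Set V).ncard : ℝ)) / 4
      ≤ (({v : V | (G.neighborSet v).ncard ≤ 3} : Set V).ncard : ℝ) := by
  classical
  have hmain := sum_card_adj_sdiff_twoCore_le G (twoCore G).toFinset (by simp) Finset.univ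
    (Finset.subset_univ _)
  have hdeg : ∀ v, (G.neighborSet v).ncard = (Finset.univ.filter (fun w => G.Adj v w)).card := by
    intro v
    rw [← Set.ncard_coe_finset]
    congr 1
    ext w
    simp
  set W : Finset V := Finset.univ \ (twoCore G).toFinset with hW
  have hWcard : ((twoCore G)ᶜ : Set V).ncard = W.card := by
    rw [← Set.ncard_coe_finset]
    congr 1
    ext w
    simp [hW]
  set S : Finset V := Finset.univ.filter (fun v => (G.neighborSet v).ncard ≤ 3) with hS
  have hScard : ({v : V | (G.neighborSet v).ncard ≤ 3} : Set V).ncard = S.card := by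
    rw [← Set.ncard_coe_finset]
    congr 1
    ext w
    simp [hS]
  have hhigh : (W \ S).card * 4
      ≤ ∑ u ∈ W \ S, (Finset.univ.filter (fun w => G.Adj u w)).card := by
    rw [← smul_eq_mul]
    apply Finset.card_nsmul_le_sum
    intro u hu
    have hu' : ¬ (G.neighborSet u).ncard ≤ 3 := by
      simpa [hS] using (Finset.mem_sdiff.1 hu).2
    rw [hdeg] at hu'
    omega
  have hsub : ∑ u ∈ W \ S, (Finset.univ.filter (fun w => G.Adj u w)).card
      ≤ ∑ u ∈ W, (Finset.univ.filter (fun w => G.Adj u w)).card :=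
    Finset.sum_le_sum_of_subset Finset.sdiff_subset
  have hcard : W.card ≤ (W \ S).card + S.card := by
    have := Finset.le_card_sdiff S W
    omega
  rw [hWcard, hScard]
  have hfinal : W.card ≤ 4 * S.card := by omega
  have : (W.card : ℝ) ≤ 4 * S.card := by exact_mod_cast hfinal
  linarith
end

section
/- Let G = (V,E) be a random G(n,p) graph, let 3 ≤ k ≤ log n, and pick two functions φ, ψ : {1,...,k} → V uniformly and independently at random (also independently of G). Let C₁ be the event that (φ,ψ) is a type I configuration of G. Then Pr(C₁) ≤ p^k · (2/n + p)^k. -/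
/-!
By independence, a fixed edge set `F` lies in `G(n,p)` with probability `p ^ |F|`. If `φ` and `ψ`
trace simple cycles, each cycle has exactly `k ≥ 3` edges, so `F = E(φ) ∪ E(ψ)` satisfies
`p ^ |F| = p ^ k * ∏ i, w i`, where `w i` is `1` if the `i`-th edge of `ψ` belongs to `E(φ)` and `p`
otherwise. Since `w i ≤ 1[ψ-edge i ∈ E(φ)] + p`, expanding the product over sets `S` of indices
reduces the theorem to the following count for a fixed `φ`: at most `2 ^ |S| * n ^ (k - |S|)`
injective `ψ` have all their edges indexed by `S` inside `E(φ)`.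

* If some index is missing from `S`, walk around the cycle starting just after it. Each step in `S`
  leaves at most two choices, because `E(φ)` has maximum degree two, and each other step leaves at
  most `n` (`count_partial`).
* If `S` is everything, an injective `ψ` cannot backtrack, so it is determined by its first arc.
  There are at most `2k ≤ 2 ^ k` arcs (`count_full`).

Summing over `S` gives `(2 + n p) ^ k` for each `φ`, and there are at most `n ^ k` choices of `φ`.
-/

open scoped Classical

/-- The probability of an event `A` depending on a `G(n,p)` graph together with two
uniformly random independent maps `φ ψ : Fin k → Fin n`. -/
noncomputable def gnpCfgProb (n k : ℕ) (p : ℝ)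
    (A : SimpleGraph (Fin n) → (Fin k → Fin n) → (Fin k → Fin n) → Prop) : ℝ :=
  (∑ G : SimpleGraph (Fin n), ∑ φ : Fin k → Fin n, ∑ ψ : Fin k → Fin n,
      if A G φ ψ then gnpWeight n p G else 0) / (n : ℝ) ^ (2 * k)

/-- `(φ 1, …, φ k, φ 1)` is a simple cycle of `G`: the `φ i` are distinct and consecutive
vertices (cyclically) are adjacent. -/
def IsCycleSeq {V : Type*} {k : ℕ} (G : SimpleGraph V) (φ : Fin k → V) : Prop :=
  Function.Injective φ ∧ ∀ i : Fin k, G.Adj (φ i) (φ (finRotate k i))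

/-- `(φ 1, …, φ k)` is a simple path of `G`: the `φ i` are distinct and consecutive
vertices are adjacent. -/
def IsPathSeq {V : Type*} {k : ℕ} (G : SimpleGraph V) (φ : Fin k → V) : Prop :=
  Function.Injective φ ∧
    ∀ (i : ℕ) (h : i + 1 < k), G.Adj (φ ⟨i, Nat.lt_of_succ_lt h⟩) (φ ⟨i + 1, h⟩)

/-- A type I configuration: `k ≤ log n`, no confluences (`φ i ≠ ψ i` for all `i`), and both
`(φ 1, …, φ k, φ 1)` and `(ψ 1, …, ψ k, ψ 1)` are simple cycles of `G`. -/
def TypeI {n k : ℕ} (G : SimpleGraph (Fin n)) (φ ψ : Fin k → Fin n) : Prop :=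
  (k : ℝ) ≤ Real.log n ∧ (∀ i, φ i ≠ ψ i) ∧ IsCycleSeq G φ ∧ IsCycleSeq G ψ

/-- A type II configuration: `k ≤ log n`, each of `(φ 1, …, φ k)` and `(ψ 1, …, ψ k)` is a
simple path or a simple cycle of `G`, and the first and last indices are the only
confluences. -/
def TypeII {n k : ℕ} (G : SimpleGraph (Fin n)) (φ ψ : Fin k → Fin n) : Prop :=
  (k : ℝ) ≤ Real.log n ∧ (IsPathSeq G φ ∨ IsCycleSeq G φ) ∧
    (IsPathSeq G ψ ∨ IsCycleSeq G ψ) ∧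
    ∀ i : Fin k, (φ i = ψ i ↔ ((i : ℕ) = 0 ∨ (i : ℕ) = k - 1))

/-! ### Edges of a simple cycle -/

/-- The edges `{φ i, φ (i + 1)}` of the closed walk through the values of `φ`; addition in
`Fin (m + 1)` is cyclic. -/
noncomputable def cycEdges {n m : ℕ} (φ : Fin (m + 1) → Fin n) : Finset (Sym2 (Fin n)) :=
  Finset.univ.image fun i => s(φ i, φ (i + 1))

open scoped Fin.CommRing in
lemma fin_cyclic_induction {m : ℕ} (P : Fin (m + 1) → Prop) (i₀ : Fin (m + 1)) (h₀ : P i₀)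
    (hs : ∀ i, P i → P (i + 1)) (j : Fin (m + 1)) : P j := by
  have key : ∀ t : ℕ, P (i₀ + (t : Fin (m + 1))) := by
    intro t
    induction t with
    | zero => simpa using h₀
    | succ t ih =>
      have := hs _ ih
      rwa [add_assoc, ← Nat.cast_succ] at this
  have := key (j - i₀).val
  rwa [Fin.cast_val_eq_self, add_sub_cancel] at this

lemma fin_add_two_ne {m : ℕ} (hm : 2 ≤ m) (i : Fin (m + 1)) : i + 1 + 1 ≠ i := by
  intro h
  have h2 : (1 + 1 : Fin (m + 1)) = 0 := by
    have : i + (1 + 1) = i + 0 := by rw [← add_assoc, h, add_zero]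
    exact add_left_cancel this
  have h3 := congrArg Fin.val h2
  rw [Fin.val_add, Fin.val_one', Fin.val_zero] at h3
  rw [Nat.mod_eq_of_lt (show 1 < m + 1 by omega),
    Nat.mod_eq_of_lt (show 1 + 1 < m + 1 by omega)] at h3
  omega

lemma cycEdge_injective {V : Type*} {m : ℕ} (hm : 2 ≤ m) {φ : Fin (m + 1) → V}
    (hφ : Function.Injective φ) :
    Function.Injective fun i => s(φ i, φ (i + 1)) := by
  intro i j h
  rcases Sym2.eq_iff.1 h with ⟨h1, -⟩ | ⟨h1, h2⟩
  · exact hφ h1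
  · have h1 := hφ h1
    have h2 := hφ h2
    rw [h1] at h2
    exact absurd h2 (fin_add_two_ne hm j)

/-- A vertex of a simple cycle has at most two neighbours along the cycle. -/
lemma cycEdges_degree {n m : ℕ} {φ : Fin (m + 1) → Fin n}
    (hφ : Function.Injective φ) (x a b c : Fin n) (ha : s(x, a) ∈ cycEdges φ)
    (hb : s(x, b) ∈ cycEdges φ) (hc : s(x, c) ∈ cycEdges φ) : a = b ∨ a = c ∨ b = c := by
  have key : ∀ y, s(x, y) ∈ cycEdges φ →
      ∃ j, x = φ j ∧ (y = φ (j + 1) ∨ y = φ (j - 1)) := by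
    intro y hy
    obtain ⟨i, -, hi⟩ := Finset.mem_image.1 hy
    rcases Sym2.eq_iff.1 hi with ⟨h1, h2⟩ | ⟨h1, h2⟩
    · exact ⟨i, h1.symm, Or.inl h2.symm⟩
    · exact ⟨i + 1, h2.symm, Or.inr (by rw [add_sub_cancel_right, h1])⟩
  obtain ⟨j, hj, h1⟩ := key a ha
  obtain ⟨j', hj', h2⟩ := key b hb
  obtain ⟨j'', hj'', h3⟩ := key c hc
  obtain rfl : j' = j := hφ (hj'.symm.trans hj)
  obtain rfl : j'' = j' := hφ (hj''.symm.trans hj)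
  rcases h1 with h1 | h1 <;> rcases h2 with h2 | h2 <;> rcases h3 with h3 | h3 <;> simp_all

/-! ### Counting maps with prescribed edges in a cycle -/

lemma count_partial {n m : ℕ} (E : Finset (Sym2 (Fin n)))
    (hE : ∀ x a b c, s(x, a) ∈ E → s(x, b) ∈ E → s(x, c) ∈ E → a = b ∨ a = c ∨ b = c)
    (S : Finset (Fin (m + 1))) (i₀ : Fin (m + 1)) (hi₀ : i₀ ∉ S) :
    (Finset.univ.filter fun ψ : Fin (m + 1) → Fin n =>
      ∀ i ∈ S, s(ψ i, ψ (i + 1)) ∈ E).card ≤ 2 ^ S.card * n ^ (m + 1 - S.card) := by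
  -- `nb x` is a distinguished neighbour of `x`, when `x` has one.
  have hnb : ∀ x : Fin n, ∃ y : Fin n, (∃ z, s(x, z) ∈ E) → s(x, y) ∈ E := by
    intro x
    by_cases h : ∃ z, s(x, z) ∈ E
    · exact ⟨h.choose, fun _ => h.choose_spec⟩
    · exact ⟨x, fun h' => absurd h' h⟩
  choose nb hnb using hnb
  -- A step in `S` is encoded by whether it goes to the distinguished neighbour, any other step
  -- by its endpoint.
  let code : (Fin (m + 1) → Fin n) → (S → Bool) × ({i // i ∉ S} → Fin n) := fun ψ =>
    (fun i => decide (ψ (i.1 + 1) = nb (ψ i.1)), fun i => ψ (i.1 + 1))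
  have hcard : Fintype.card ((S → Bool) × ({i // i ∉ S} → Fin n))
      = 2 ^ S.card * n ^ (m + 1 - S.card) := by
    rw [Fintype.card_prod, Fintype.card_fun, Fintype.card_fun, Fintype.card_bool,
      Fintype.card_fin, Fintype.card_coe]
    congr 2
    rw [Fintype.card_subtype_compl, Fintype.card_fin, Fintype.card_coe]
  rw [← hcard, ← Finset.card_univ]
  refine Finset.card_le_card_of_injOn code (fun _ _ => Finset.mem_coe.2 (Finset.mem_univ _)) ?_
  intro ψ hψ ψ' hψ' hc
  simp only [Finset.coe_filter, Finset.mem_univ, true_and, Set.mem_ofPred_eq] at hψ hψ'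
  have hin : ∀ i, i ∈ S → (ψ (i + 1) = nb (ψ i) ↔ ψ' (i + 1) = nb (ψ' i)) := by
    intro i hi
    have := congrFun (congrArg Prod.fst hc) ⟨i, hi⟩
    exact decide_eq_decide.1 this
  have hout : ∀ i, i ∉ S → ψ (i + 1) = ψ' (i + 1) := fun i hi =>
    congrFun (congrArg Prod.snd hc) ⟨i, hi⟩
  funext j
  refine fin_cyclic_induction (fun j => ψ j = ψ' j) (i₀ + 1) (hout _ hi₀) ?_ j
  intro i ih
  by_cases hi : i ∈ S
  · have h1 := hψ i hi
    have h2 := hψ' i hi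
    have h3 := hin i hi
    rw [← ih] at h2 h3
    have h4 := hnb (ψ i) ⟨_, h1⟩
    rcases hE _ _ _ _ h1 h2 h4 with h | h | h
    · exact h
    · rw [h, h3.1 h]
    · rw [h, h3.2 h]
  · exact hout i hi

lemma count_full {n m : ℕ} (hm : 2 ≤ m) {φ : Fin (m + 1) → Fin n}
    (hφ : Function.Injective φ) :
    (Finset.univ.filter fun ψ : Fin (m + 1) → Fin n => Function.Injective ψ ∧
      ∀ i, s(ψ i, ψ (i + 1)) ∈ cycEdges φ).card ≤ 2 * (m + 1) := by
  let arcs : Finset (Fin n × Fin n) := (Finset.univ : Finset (Fin (m + 1) × Bool)).image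
    fun q => if q.2 then (φ q.1, φ (q.1 + 1)) else (φ (q.1 + 1), φ q.1)
  have harcs : arcs.card ≤ 2 * (m + 1) := by
    refine Finset.card_image_le.trans ?_
    rw [Finset.card_univ, Fintype.card_prod, Fintype.card_bool, Fintype.card_fin, mul_comm]
  refine le_trans (Finset.card_le_card_of_injOn (fun ψ => (ψ 0, ψ (0 + 1))) ?_ ?_) harcs
  · intro ψ hψ
    simp only [Finset.coe_filter, Finset.mem_univ, true_and, Set.mem_ofPred_eq] at hψ
    obtain ⟨i, -, hi⟩ := Finset.mem_image.1 (hψ.2 0)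
    refine Finset.mem_coe.2 (Finset.mem_image.2 ?_)
    rcases Sym2.eq_iff.1 hi with ⟨h1, h2⟩ | ⟨h1, h2⟩
    · exact ⟨(i, true), Finset.mem_univ _, by simp only [if_true, h1, h2]⟩
    · exact ⟨(i, false), Finset.mem_univ _, by simp [h1, h2]⟩
  · intro ψ hψ ψ' hψ' hc
    simp only [Finset.coe_filter, Finset.mem_univ, true_and, Set.mem_ofPred_eq] at hψ hψ'
    have hc1 := congrArg Prod.fst hc
    have hc2 := congrArg Prod.snd hc
    funext j
    refine (fin_cyclic_induction (fun j => ψ j = ψ' j ∧ ψ (j + 1) = ψ' (j + 1)) 0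
      ⟨hc1, hc2⟩ ?_ j).1
    rintro i ⟨h1, h2⟩
    refine ⟨h2, ?_⟩
    have e1 := hψ.2 i
    have e2 := hψ.2 (i + 1)
    have e3 := hψ'.2 (i + 1)
    rw [Sym2.eq_swap] at e1
    rw [← h2] at e3
    -- Injectivity excludes returning along the edge just traversed.
    rcases cycEdges_degree hφ _ _ _ _ e1 e2 e3 with h | h | h
    · exact absurd (hψ.1 h).symm (fin_add_two_ne hm i)
    · rw [h1] at h
      exact absurd (hψ'.1 h).symm (fin_add_two_ne hm i)
    · exact h

lemma two_mul_le_two_pow {k : ℕ} (hk : 3 ≤ k) : 2 * k ≤ 2 ^ k := by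
  induction k, hk using Nat.le_induction with
  | base => norm_num
  | succ k hk ih => rw [pow_succ]; omega

lemma count_le {n m : ℕ} (hm : 2 ≤ m) {φ : Fin (m + 1) → Fin n}
    (hφ : Function.Injective φ) (S : Finset (Fin (m + 1))) :
    (Finset.univ.filter fun ψ : Fin (m + 1) → Fin n => Function.Injective ψ ∧
      ∀ i ∈ S, s(ψ i, ψ (i + 1)) ∈ cycEdges φ).card ≤ 2 ^ S.card * n ^ (m + 1 - S.card) := by
  by_cases h : ∃ i, i ∉ S
  · obtain ⟨i₀, hi₀⟩ := h
    refine le_trans (Finset.card_le_card ?_)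
      (count_partial (cycEdges φ) (cycEdges_degree hφ) S i₀ hi₀)
    intro ψ hψ
    simp only [Finset.mem_filter, Finset.mem_univ, true_and] at hψ ⊢
    exact hψ.2
  · push Not at h
    obtain rfl : S = Finset.univ := Finset.eq_univ_iff_forall.2 h
    have h1 := count_full hm hφ
    have h2 : 2 * (m + 1) ≤ 2 ^ (m + 1) :=
      two_mul_le_two_pow (by omega)
    simpa using h1.trans h2

/-! ### Edge sets contained in `G(n,p)` -/

/-- The edges of `F`, none of them a loop, are all present in `G(n,p)` with probability at most
`p ^ |F|`. -/
lemma gnp_contains_le {n : ℕ} {p : ℝ} (hp0 : 0 ≤ p) (hp1 : p ≤ 1) (F : Finset (Sym2 (Fin n)))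
    (hF : F ⊆ (⊤ : SimpleGraph (Fin n)).edgeFinset) :
    ∑ G : SimpleGraph (Fin n), (if F ⊆ G.edgeFinset then gnpWeight n p G else 0)
      ≤ p ^ F.card := by
  set U := (⊤ : SimpleGraph (Fin n)).edgeFinset with hU
  have hUc : U.card = n.choose 2 := by
    rw [hU, SimpleGraph.card_edgeFinset_top_eq_card_choose_two, Fintype.card_fin]
  have hq : 0 ≤ 1 - p := by linarith
  -- Forbidding the absence of edges of `F` turns the constrained sum into a binomial expansion.
  let g : Sym2 (Fin n) → ℝ := fun e => if e ∈ F then 0 else 1 - p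
  let f : Finset (Sym2 (Fin n)) → ℝ := fun T => (∏ _e ∈ T, p) * ∏ e ∈ U \ T, g e
  have hg : ∀ e, 0 ≤ g e := fun e => by
    simp only [g]; split_ifs <;> simp [hq]
  have hsub : ∀ G : SimpleGraph (Fin n), G.edgeFinset ⊆ U := fun G =>
    SimpleGraph.edgeFinset_mono le_top
  have hterm : ∀ G : SimpleGraph (Fin n),
      (if F ⊆ G.edgeFinset then gnpWeight n p G else 0) ≤ f G.edgeFinset := by
    intro G
    split_ifs with h
    · refine le_of_eq ?_
      have : ∏ e ∈ U \ G.edgeFinset, g e = ∏ _e ∈ U \ G.edgeFinset, (1 - p) := by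
        refine Finset.prod_congr rfl fun e he => ?_
        have : e ∉ F := fun h' => (Finset.mem_sdiff.1 he).2 (h h')
        simp [g, this]
      simp only [f]
      rw [this, Finset.prod_const, Finset.prod_const, Finset.card_sdiff_of_subset (hsub G), hUc]
      rfl
    · exact mul_nonneg (Finset.prod_nonneg fun _ _ => hp0) (Finset.prod_nonneg fun e _ => hg e)
  calc _ ≤ ∑ G : SimpleGraph (Fin n), f G.edgeFinset := Finset.sum_le_sum fun G _ => hterm G
    _ = ∑ T ∈ Finset.univ.image fun G : SimpleGraph (Fin n) => G.edgeFinset, f T := by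
        rw [Finset.sum_image]
        intro G _ H _ h
        exact SimpleGraph.edgeFinset_inj.1 h
    _ ≤ ∑ T ∈ U.powerset, f T := by
        refine Finset.sum_le_sum_of_subset_of_nonneg ?_ ?_
        · intro T hT
          obtain ⟨G, -, rfl⟩ := Finset.mem_image.1 hT
          exact Finset.mem_powerset.2 (hsub G)
        · intro T _ _
          exact mul_nonneg (Finset.prod_nonneg fun _ _ => hp0)
            (Finset.prod_nonneg fun e _ => hg e)
    _ = ∏ e ∈ U, (p + g e) := (Finset.prod_add _ _ _).symm
    _ = ∏ e ∈ U, (if e ∈ F then p else 1) := by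
        refine Finset.prod_congr rfl fun e _ => ?_
        simp only [g]; split_ifs <;> ring
    _ = p ^ F.card := by
        rw [Finset.prod_ite, Finset.prod_const_one, mul_one, Finset.prod_const,
          Finset.filter_mem_eq_inter, Finset.inter_eq_right.2 hF]

/-- For simple cycles `φ` and `ψ`, the power `p ^ |E(φ) ∪ E(ψ)|` as a product over the edges
of `ψ`. -/
lemma pow_card_union {n m : ℕ} (hm : 2 ≤ m) {φ ψ : Fin (m + 1) → Fin n}
    (hφ : Function.Injective φ) (hψ : Function.Injective ψ) (p : ℝ) :
    p ^ (cycEdges φ ∪ cycEdges ψ).card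
      = p ^ (m + 1) * ∏ i, if s(ψ i, ψ (i + 1)) ∈ cycEdges φ then 1 else p := by
  have h1 : (cycEdges φ).card = m + 1 := by
    rw [cycEdges, Finset.card_image_of_injective _ (cycEdge_injective hm hφ), Finset.card_univ,
      Fintype.card_fin]
  have h2 : (cycEdges ψ \ cycEdges φ)
      = (Finset.univ.filter fun i => s(ψ i, ψ (i + 1)) ∉ cycEdges φ).image
        fun i => s(ψ i, ψ (i + 1)) := by
    ext e
    simp only [Finset.mem_sdiff, Finset.mem_image, Finset.mem_filter, Finset.mem_univ, true_and]
    constructor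
    · rintro ⟨h, h'⟩
      obtain ⟨i, -, rfl⟩ := Finset.mem_image.1 h
      exact ⟨i, h', rfl⟩
    · rintro ⟨i, h, rfl⟩
      exact ⟨Finset.mem_image_of_mem _ (Finset.mem_univ i), h⟩
  rw [← Finset.union_sdiff_self_eq_union, Finset.card_union_of_disjoint Finset.disjoint_sdiff, h1,
    h2, Finset.card_image_of_injective _ (cycEdge_injective hm hψ), pow_add, Finset.prod_ite,
    Finset.prod_const_one, one_mul, Finset.prod_const]

lemma cycEdges_subset_top {n m : ℕ} (hm : 2 ≤ m) {φ : Fin (m + 1) → Fin n}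
    (hφ : Function.Injective φ) :
    cycEdges φ ⊆ (⊤ : SimpleGraph (Fin n)).edgeFinset := by
  intro e he
  obtain ⟨i, -, rfl⟩ := Finset.mem_image.1 he
  rw [SimpleGraph.mem_edgeFinset, SimpleGraph.mem_edgeSet, SimpleGraph.top_adj]
  intro h
  have h' := hφ h
  exact fin_add_two_ne hm i (by rw [← h', ← h'])

lemma cycEdges_subset_edgeFinset {n m : ℕ} {G : SimpleGraph (Fin n)} {φ : Fin (m + 1) → Fin n}
    (h : IsCycleSeq G φ) : cycEdges φ ⊆ G.edgeFinset := by
  intro e he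
  obtain ⟨i, -, rfl⟩ := Finset.mem_image.1 he
  rw [SimpleGraph.mem_edgeFinset, SimpleGraph.mem_edgeSet]
  simpa only [finRotate_apply] using h.2 i

/-! ### Averaging over the maps -/

/-- For fixed maps, the probability of a type I configuration is bounded with the weight of each
edge of `ψ` relaxed to `1[edge ∈ E(φ)] + p`, a sum suited to expanding the product. -/
lemma sum_graphs_le {n m : ℕ} (hm : 2 ≤ m) {p : ℝ} (hp0 : 0 ≤ p) (hp1 : p ≤ 1)
    (φ ψ : Fin (m + 1) → Fin n) :
    ∑ G : SimpleGraph (Fin n), (if TypeI G φ ψ then gnpWeight n p G else 0)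
      ≤ if Function.Injective φ ∧ Function.Injective ψ then
          p ^ (m + 1) * ∏ i, ((if s(ψ i, ψ (i + 1)) ∈ cycEdges φ then 1 else 0) + p) else 0 := by
  have hw : ∀ G : SimpleGraph (Fin n), 0 ≤ gnpWeight n p G := fun G =>
    mul_nonneg (pow_nonneg hp0 _) (pow_nonneg (by linarith) _)
  split_ifs with h
  · obtain ⟨hφ, hψ⟩ := h
    calc _ ≤ ∑ G : SimpleGraph (Fin n),
            (if cycEdges φ ∪ cycEdges ψ ⊆ G.edgeFinset then gnpWeight n p G else 0) := by
          refine Finset.sum_le_sum fun G _ => ?_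
          by_cases hT : TypeI G φ ψ
          · rw [if_pos hT, if_pos (Finset.union_subset (cycEdges_subset_edgeFinset hT.2.2.1)
              (cycEdges_subset_edgeFinset hT.2.2.2))]
          · rw [if_neg hT]
            split_ifs
            · exact hw G
            · exact le_rfl
      _ ≤ p ^ (cycEdges φ ∪ cycEdges ψ).card := gnp_contains_le hp0 hp1 _
          (Finset.union_subset (cycEdges_subset_top hm hφ) (cycEdges_subset_top hm hψ))
      _ = _ := pow_card_union hm hφ hψ p
      _ ≤ _ := by
          refine mul_le_mul_of_nonneg_left ?_ (pow_nonneg hp0 _)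
          refine Finset.prod_le_prod (fun i _ => ?_) fun i _ => ?_
          · split_ifs <;> linarith
          · split_ifs <;> linarith
  · refine le_of_eq (Finset.sum_eq_zero fun G _ => if_neg ?_)
    exact fun hT => h ⟨hT.2.2.1.1, hT.2.2.2.1⟩

/-- The relaxed weights of all injective `ψ`, for a fixed simple cycle `φ`, sum to at most
`(2 + n p) ^ k`. -/
lemma sum_psi_le {n m : ℕ} (hm : 2 ≤ m) {p : ℝ} (hp0 : 0 ≤ p) {φ : Fin (m + 1) → Fin n}
    (hφ : Function.Injective φ) :
    ∑ ψ : Fin (m + 1) → Fin n, (if Function.Injective ψ then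
        ∏ i, ((if s(ψ i, ψ (i + 1)) ∈ cycEdges φ then 1 else 0) + p) else 0)
      ≤ (2 + n * p) ^ (m + 1) := by
  calc _ = ∑ ψ : Fin (m + 1) → Fin n, ∑ S : Finset (Fin (m + 1)),
        (if Function.Injective ψ ∧ ∀ i ∈ S, s(ψ i, ψ (i + 1)) ∈ cycEdges φ then 1 else 0)
          * p ^ (m + 1 - S.card) := by
        refine Finset.sum_congr rfl fun ψ _ => ?_
        by_cases hψ : Function.Injective ψ
        · rw [if_pos hψ, Finset.prod_add, Finset.powerset_univ]
          refine Finset.sum_congr rfl fun S _ => ?_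
          rw [Finset.prod_const, ← Finset.compl_eq_univ_sdiff, Finset.card_compl,
            Fintype.card_fin, Finset.prod_ite_zero, Finset.prod_const_one]
          congr 1
          simp only [hψ, true_and]
          congr
        · simp [hψ]
    _ = ∑ S : Finset (Fin (m + 1)),
          ((Finset.univ.filter fun ψ : Fin (m + 1) → Fin n => Function.Injective ψ ∧
            ∀ i ∈ S, s(ψ i, ψ (i + 1)) ∈ cycEdges φ).card : ℝ) * p ^ (m + 1 - S.card) := by
        rw [Finset.sum_comm]
        refine Finset.sum_congr rfl fun S _ => ?_
        rw [← Finset.sum_mul, Finset.sum_boole]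
    _ ≤ ∑ S : Finset (Fin (m + 1)), (2 : ℝ) ^ S.card * (n * p) ^ (m + 1 - S.card) := by
        refine Finset.sum_le_sum fun S _ => ?_
        rw [mul_pow, ← mul_assoc]
        refine mul_le_mul_of_nonneg_right ?_ (pow_nonneg hp0 _)
        exact_mod_cast count_le hm hφ S
    _ = (2 + n * p) ^ (m + 1) := by
        rw [Fin.sum_pow_mul_eq_add_pow]

/-- The probability that two uniformly random maps `φ, ψ : Fin k → Fin n` form a type I
configuration of a `G(n,p)` graph is at most `p^k · (2/n + p)^k`. -/
theorem typeI_prob_bound (n k : ℕ) (hk : 3 ≤ k) (hk' : (k : ℝ) ≤ Real.log n)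
    (p : ℝ) (hp0 : 0 ≤ p) (hp1 : p ≤ 1) :
    gnpCfgProb n k p (fun G φ ψ => TypeI G φ ψ)
      ≤ p ^ k * (2 / (n : ℝ) + p) ^ k := by
  obtain ⟨m, rfl⟩ : ∃ m, k = m + 1 := ⟨k - 1, by omega⟩
  have hm : 2 ≤ m := by omega
  have hn : (0 : ℝ) < n := by
    rcases Nat.eq_zero_or_pos n with rfl | h
    · rw [Nat.cast_zero, Real.log_zero] at hk'
      have : (0 : ℝ) < ((m + 1 : ℕ) : ℝ) := by positivity
      linarith
    · exact_mod_cast h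
  have hcomm : (∑ G : SimpleGraph (Fin n), ∑ φ : Fin (m + 1) → Fin n, ∑ ψ : Fin (m + 1) → Fin n,
      if TypeI G φ ψ then gnpWeight n p G else 0)
      = ∑ φ : Fin (m + 1) → Fin n, ∑ ψ : Fin (m + 1) → Fin n, ∑ G : SimpleGraph (Fin n),
        if TypeI G φ ψ then gnpWeight n p G else 0 := by
    rw [Finset.sum_comm]
    exact Finset.sum_congr rfl fun φ _ => Finset.sum_comm
  have hφb : ∀ φ : Fin (m + 1) → Fin n,
      (∑ ψ : Fin (m + 1) → Fin n, ∑ G : SimpleGraph (Fin n),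
        if TypeI G φ ψ then gnpWeight n p G else 0) ≤ p ^ (m + 1) * (2 + n * p) ^ (m + 1) := by
    intro φ
    refine (Finset.sum_le_sum fun ψ _ => sum_graphs_le hm hp0 hp1 φ ψ).trans ?_
    by_cases hφ : Function.Injective φ
    · refine le_trans (le_of_eq ?_)
        (mul_le_mul_of_nonneg_left (sum_psi_le hm hp0 hφ) (pow_nonneg hp0 (m + 1)))
      rw [Finset.mul_sum]
      refine Finset.sum_congr rfl fun ψ _ => ?_
      simp only [hφ, true_and, mul_ite, mul_zero]
    · simp only [hφ, false_and, if_false, Finset.sum_const_zero]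
      positivity
  have htot := Finset.sum_le_sum fun φ (_ : φ ∈ Finset.univ) => hφb φ
  rw [Finset.sum_const, Finset.card_univ, Fintype.card_fun, Fintype.card_fin, Fintype.card_fin,
    nsmul_eq_mul, Nat.cast_pow] at htot
  rw [gnpCfgProb, hcomm, div_le_iff₀ (pow_pos hn _)]
  refine htot.trans (le_of_eq ?_)
  have h1 : (2 + n * p : ℝ) = n * (2 / n + p) := by field_simp
  rw [h1, mul_pow, two_mul, pow_add]
  ring
end
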